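/- arXiv:math/0603112 — 2 statements merged into one kernel-verified Lean document; each statement's English description precedes it below -/
import Mathlib

section
/- For every ε > 0 there exists C_ε > 0 such that for every n₁, n₂ ≥ 1, ‖e_{n₁} e_{n₂}‖_{L²(Θ)} ≤ C_ε (min(n₁, n₂))^ε. -/
/-- The Bessel function of order zero, defined by its power series. -/
noncomputable def J0 (x : ℝ) : ℝ :=
  ∑' j : ℕ, ((-1 : ℝ) ^ j / ((Nat.factorial j : ℝ)) ^ 2) * (x / 2) ^ (2 * j)

/-- The `L²(Θ)` norm of `J₀(z_n ·)`. -/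
noncomputable def besselL2 (z : ℕ → ℝ) (n : ℕ) : ℝ :=
  Real.sqrt (2 * Real.pi * ∫ r in (0 : ℝ)..1, (J0 (z n * r)) ^ 2 * r)

/-- The normalized Dirichlet eigenfunction `e_n(r) = J₀(z_n r)/‖J₀(z_n ·)‖_{L²(Θ)}`. -/
noncomputable def efun (z : ℕ → ℝ) (n : ℕ) (r : ℝ) : ℝ :=
  J0 (z n * r) / besselL2 z n

theorem ps_summable (a : ℕ → ℝ) (ha : ∀ j, |a j| ≤ 1 / (j.factorial : ℝ)) (y : ℝ) :
    Summable (fun j => a j * y ^ j) := by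
  refine Summable.of_norm_bounded (g := fun j => |y| ^ j / (j.factorial : ℝ))
    (Real.summable_pow_div_factorial |y|) ?_
  intro j
  rw [Real.norm_eq_abs, abs_mul, abs_pow]
  calc |a j| * |y| ^ j ≤ 1 / (j.factorial : ℝ) * |y| ^ j := by
        gcongr
        exact ha j
    _ = _ := by ring

theorem ps_deriv (a : ℕ → ℝ) (ha : ∀ j, |a j| ≤ 1 / (j.factorial : ℝ)) (y : ℝ) :
    HasDerivAt (fun y => ∑' j, a j * y ^ j) (∑' j : ℕ, ((j : ℝ) + 1) * a (j + 1) * y ^ j) y := by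
  set R := |y| + 1 with hR
  have hRpos : 0 < R := by positivity
  have hsum : Summable (fun j : ℕ => (j : ℝ) * (1 / (j.factorial : ℝ)) * R ^ (j - 1)) := by
    rw [← summable_nat_add_iff 1]
    refine (Real.summable_pow_div_factorial R).congr ?_
    intro j
    rw [Nat.factorial_succ, Nat.add_sub_cancel]
    push_cast
    field_simp
  have key := hasDerivAt_tsum_of_isPreconnected (𝕜 := ℝ)
    (g := fun (j : ℕ) (y : ℝ) => a j * y ^ j)
    (g' := fun (j : ℕ) (y : ℝ) => a j * ((j : ℝ) * y ^ (j - 1)))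
    (t := Metric.ball (0 : ℝ) R) (y₀ := 0) (y := y) hsum Metric.isOpen_ball
    (convex_ball 0 R).isPreconnected
    (fun j x _ => (hasDerivAt_pow j x).const_mul (a j))
    (by
      intro j x hx
      have hx' : |x| ≤ R := by
        have := hx
        rw [mem_ball_zero_iff, Real.norm_eq_abs] at this
        exact this.le
      rw [Real.norm_eq_abs, abs_mul, abs_mul, abs_pow, Nat.abs_cast]
      calc |a j| * ((j : ℝ) * |x| ^ (j - 1)) ≤ 1 / (j.factorial : ℝ) * ((j : ℝ) * R ^ (j - 1)) := by
            gcongr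
            exact ha j
        _ = _ := by ring)
    (Metric.mem_ball_self hRpos) (ps_summable a ha 0)
    (by rw [mem_ball_zero_iff, Real.norm_eq_abs]; linarith)
  refine HasDerivAt.congr_deriv (key) ?_
  have hs : Summable (fun j : ℕ => a j * ((j : ℝ) * y ^ (j - 1))) := by
    refine Summable.of_norm_bounded hsum ?_
    intro j
    rw [Real.norm_eq_abs, abs_mul, abs_mul, abs_pow, Nat.abs_cast]
    have : |y| ≤ R := by linarith
    calc |a j| * ((j : ℝ) * |y| ^ (j - 1)) ≤ 1 / (j.factorial : ℝ) * ((j : ℝ) * R ^ (j - 1)) := by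
          gcongr
          exact ha j
      _ = _ := by ring
  rw [hs.tsum_eq_zero_add]
  simp only [Nat.cast_zero, zero_mul, mul_zero, zero_add]
  congr 1
  ext j
  rw [Nat.add_sub_cancel]
  push_cast
  ring

noncomputable def ca (j : ℕ) : ℝ := (-1 : ℝ) ^ j / ((Nat.factorial j : ℝ)) ^ 2

theorem ca_abs (j : ℕ) : |ca j| = 1 / (j.factorial : ℝ) ^ 2 := by
  unfold ca
  rw [abs_div, abs_pow]
  simp

theorem one_le_fact (j : ℕ) : (1 : ℝ) ≤ (j.factorial : ℝ) := by
  exact_mod_cast Nat.one_le_iff_ne_zero.mpr (Nat.factorial_ne_zero j)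

theorem ca_bound (j : ℕ) : |ca j| ≤ 1 / (j.factorial : ℝ) := by
  rw [ca_abs]
  have := one_le_fact j
  apply one_div_le_one_div_of_le (by linarith)
  nlinarith

theorem ca_bound2 (j : ℕ) : |(j : ℝ) * ca j| ≤ 1 / (j.factorial : ℝ) := by
  rw [abs_mul, ca_abs, Nat.abs_cast]
  have h1 := one_le_fact j
  have h2 : (j : ℝ) ≤ (j.factorial : ℝ) := by exact_mod_cast Nat.self_le_factorial j
  rw [mul_one_div, div_le_div_iff₀ (by positivity) (by positivity)]
  nlinarith

theorem ca_bound3 (j : ℕ) : |((j : ℝ) + 1) * ca (j + 1)| ≤ 1 / (j.factorial : ℝ) := by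
  have h := ca_bound2 (j + 1)
  push_cast at h
  refine h.trans ?_
  apply one_div_le_one_div_of_le (by have := one_le_fact j; linarith)
  exact_mod_cast Nat.factorial_le (Nat.le_succ j)

theorem ca_succ (j : ℕ) : ((j : ℝ) + 1) * (((j : ℝ) + 1) * ca (j + 1)) = - ca j := by
  unfold ca
  rw [Nat.factorial_succ, pow_succ]
  push_cast
  have := one_le_fact j
  field_simp

noncomputable def gg (y : ℝ) : ℝ := ∑' j, ca j * y ^ j
noncomputable def kk (y : ℝ) : ℝ := ∑' j : ℕ, (((j : ℝ) + 1) * ca (j + 1)) * y ^ j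

theorem gg_deriv (y : ℝ) : HasDerivAt gg (kk y) y := ps_deriv ca ca_bound y

theorem kk_cont : Continuous kk := by
  rw [continuous_iff_continuousAt]
  intro y
  exact (ps_deriv _ ca_bound3 y).continuousAt

theorem ykk_deriv (y : ℝ) : HasDerivAt (fun y => y * kk y) (- gg y) y := by
  have h := ps_deriv (fun j => (j : ℝ) * ca j) ca_bound2 y
  have e1 : (fun y : ℝ => ∑' j : ℕ, (j : ℝ) * ca j * y ^ j) = fun y => y * kk y := by
    ext y
    rw [(ps_summable _ ca_bound2 y).tsum_eq_zero_add]
    simp only [Nat.cast_zero, zero_mul, zero_add]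
    unfold kk
    rw [← tsum_mul_left]
    congr 1
    ext j
    push_cast
    ring
  rw [e1] at h
  refine HasDerivAt.congr_deriv (h) ?_
  unfold gg
  rw [← tsum_neg]
  congr 1
  ext j
  push_cast
  rw [ca_succ]
  ring

theorem J0_eq (x : ℝ) : J0 x = gg (x ^ 2 / 4) := by
  unfold J0 gg ca
  congr 1
  ext j
  rw [pow_mul]
  congr 2
  ring

/-- The derivative of `J0`. -/
noncomputable def K0 (x : ℝ) : ℝ := kk (x ^ 2 / 4) * (x / 2)

theorem J0_deriv (x : ℝ) : HasDerivAt J0 (K0 x) x := by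
  have e : J0 = fun x => gg (x ^ 2 / 4) := funext J0_eq
  rw [e]
  have h1 : HasDerivAt (fun x : ℝ => x ^ 2 / 4) (x / 2) x := by
    refine HasDerivAt.congr_deriv ((hasDerivAt_pow 2 x).div_const 4) ?_
    push_cast
    ring
  exact (gg_deriv (x ^ 2 / 4)).comp x h1

theorem K0_deriv (x : ℝ) (hx : 0 < x) : HasDerivAt K0 (- J0 x - K0 x / x) x := by
  have h1 : HasDerivAt (fun x : ℝ => x ^ 2 / 4) (x / 2) x := by
    refine HasDerivAt.congr_deriv ((hasDerivAt_pow 2 x).div_const 4) ?_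
    push_cast
    ring
  have h2 := (ykk_deriv (x ^ 2 / 4)).comp x h1
  have h3 := (h2.const_mul 2).div (hasDerivAt_id x) hx.ne'
  have h4 := h3.congr_of_eventuallyEq (f₁ := K0) (by
    filter_upwards [lt_mem_nhds hx] with t ht
    simp only [K0, Function.comp, Pi.div_apply, id]
    field_simp
    ring)
  refine HasDerivAt.congr_deriv (h4) ?_
  rw [J0_eq]
  simp only [K0, Function.comp, id]
  field_simp
  ring

theorem K0_cont : Continuous K0 := by
  unfold K0
  exact (kk_cont.comp (by fun_prop)).mul (by fun_prop)

theorem J0_cont : Continuous J0 := by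
  rw [continuous_iff_continuousAt]
  intro y
  exact (J0_deriv y).continuousAt

theorem K0_zero : K0 0 = 0 := by simp [K0]

theorem J0_zero : J0 0 = 1 := by
  rw [J0_eq]
  unfold gg
  rw [tsum_eq_single 0]
  · simp [ca]
  · intro j hj
    simp [hj]

theorem energy (x : ℝ) (hx : 0 ≤ x) : J0 x ^ 2 + K0 x ^ 2 ≤ 1 := by
  have h : AntitoneOn (fun x => J0 x ^ 2 + K0 x ^ 2) (Set.Ici 0) := by
    have hd : ∀ t ∈ interior (Set.Ici (0 : ℝ)),
        HasDerivAt (fun x => J0 x ^ 2 + K0 x ^ 2) (- 2 * K0 t ^ 2 / t) t := by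
      intro t ht
      rw [interior_Ici] at ht
      have ht' : 0 < t := ht
      refine HasDerivAt.congr_deriv (((J0_deriv t).fun_pow 2).add ((K0_deriv t ht').fun_pow 2)) ?_
      push_cast
      field_simp
      ring
    apply antitoneOn_of_deriv_nonpos (convex_Ici 0)
    · exact ((J0_cont.pow 2).add (K0_cont.pow 2)).continuousOn
    · intro t ht
      exact (hd t ht).differentiableAt.differentiableWithinAt
    · intro t ht
      rw [(hd t ht).deriv]
      rw [interior_Ici] at ht
      have ht' : 0 < t := ht
      apply div_nonpos_of_nonpos_of_nonneg _ ht'.le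
      nlinarith [sq_nonneg (K0 t)]
  have := h (Set.mem_Ici.mpr le_rfl) (Set.mem_Ici.mpr hx) hx
  simpa [J0_zero, K0_zero] using this

theorem J0_lower (x : ℝ) (hx : 0 ≤ x) : 1 - x ≤ J0 x := by
  have h : MonotoneOn (fun x => J0 x + x) (Set.Ici 0) := by
    have hd : ∀ t, HasDerivAt (fun x => J0 x + x) (K0 t + 1) t := 
      fun t => (J0_deriv t).add (hasDerivAt_id t)
    apply monotoneOn_of_deriv_nonneg (convex_Ici 0)
    · exact (J0_cont.add continuous_id).continuousOn
    · intro t ht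
      exact (hd t).differentiableAt.differentiableWithinAt
    · intro t ht
      rw [(hd t).deriv]
      rw [interior_Ici] at ht
      have := energy t (le_of_lt ht)
      nlinarith [sq_nonneg (J0 t)]
  have := h (Set.mem_Ici.mpr le_rfl) (Set.mem_Ici.mpr hx) hx
  simp only [J0_zero] at this
  linarith

/-- The modified energy `u'^2 + u^2`, `u = sqrt x * J0 x`. -/
noncomputable def FF (x : ℝ) : ℝ := x * J0 x ^ 2 + x * K0 x ^ 2 + J0 x * K0 x + J0 x ^ 2 / (4 * x)

theorem FF_deriv (x : ℝ) (hx : 0 < x) :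
    HasDerivAt FF (-(x * J0 x * K0 x + J0 x ^ 2 / 2) / (2 * x ^ 2)) x := by
  have hJ := J0_deriv x
  have hK := K0_deriv x hx
  have hi := hasDerivAt_id x
  have h4 : HasDerivAt (fun x : ℝ => 4 * x) 4 x := by simpa using hi.const_mul 4
  have := (((hi.mul (hJ.fun_pow 2)).add (hi.mul (hK.fun_pow 2))).add (hJ.mul hK)).add
    ((hJ.fun_pow 2).div h4 (by positivity))
  refine HasDerivAt.congr_deriv (this) ?_
  simp only [id]
  push_cast
  field_simp
  ring

theorem FF_eq (x : ℝ) (hx : 0 < x) :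
    FF x = x * J0 x ^ 2 + x * (K0 x + J0 x / (2 * x)) ^ 2 := by
  unfold FF
  field_simp
  ring

theorem FF_bd1 (x : ℝ) (hx : 0 < x) :
    0 ≤ -(x * J0 x * K0 x + J0 x ^ 2 / 2) / (2 * x ^ 2) + FF x / (4 * x ^ 2) := by
  have : -(x * J0 x * K0 x + J0 x ^ 2 / 2) / (2 * x ^ 2) + FF x / (4 * x ^ 2)
    = x * (J0 x - (K0 x + J0 x / (2 * x))) ^ 2 / (4 * x ^ 2) := by
    rw [FF_eq x hx]; field_simp; ring
  rw [this]; positivity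

theorem FF_bd2 (x : ℝ) (hx : 0 < x) :
    -(x * J0 x * K0 x + J0 x ^ 2 / 2) / (2 * x ^ 2) - FF x / (4 * x ^ 2) ≤ 0 := by
  have : -(x * J0 x * K0 x + J0 x ^ 2 / 2) / (2 * x ^ 2) - FF x / (4 * x ^ 2)
    = - (x * (J0 x + (K0 x + J0 x / (2 * x))) ^ 2 / (4 * x ^ 2)) := by
    rw [FF_eq x hx]; field_simp; ring
  rw [this]
  have : 0 ≤ (x * (J0 x + (K0 x + J0 x / (2 * x))) ^ 2 / (4 * x ^ 2)) := by positivity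
  linarith

theorem exp_deriv (s x : ℝ) (hx : 0 < x) :
    HasDerivAt (fun x : ℝ => Real.exp (s / (4 * x))) (Real.exp (s / (4 * x)) * (-s / (4 * x ^ 2))) x := by
  have h4 : HasDerivAt (fun x : ℝ => 4 * x) 4 x := by simpa using (hasDerivAt_id x).const_mul 4
  have := ((hasDerivAt_const x s).fun_div h4 (by positivity)).exp
  refine HasDerivAt.congr_deriv (this) ?_
  field_simp
  ring

theorem FF_lower (x : ℝ) (hx : 1 / 2 ≤ x) : FF (1 / 2) * Real.exp (-1 / 2) ≤ FF x := by
  have hd : ∀ t : ℝ, 0 < t → HasDerivAt (fun x => FF x * Real.exp (-1 / (4 * x))) _ t :=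
    fun t ht => (FF_deriv t ht).mul (exp_deriv (-1) t ht)
  have h : MonotoneOn (fun x => FF x * Real.exp (-1 / (4 * x))) (Set.Ici (1 / 2)) := by
    apply monotoneOn_of_deriv_nonneg (convex_Ici _)
    · intro t ht
      have : (1 : ℝ) / 2 ≤ t := ht
      exact (hd t (by linarith)).continuousAt.continuousWithinAt
    · intro t ht
      rw [interior_Ici] at ht
      have : (1 : ℝ) / 2 < t := ht
      exact (hd t (by linarith)).differentiableAt.differentiableWithinAt
    · intro t ht
      rw [interior_Ici] at ht
      have ht2 : (1 : ℝ) / 2 < t := ht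
      rw [(hd t (by linarith)).deriv]
      have := mul_nonneg (FF_bd1 t (by linarith)) (Real.exp_nonneg (-1 / (4 * t)))
      refine this.trans (le_of_eq ?_)
      ring
  have := h (Set.mem_Ici.mpr le_rfl) (Set.mem_Ici.mpr hx) hx
  simp only at this
  norm_num at this ⊢
  refine this.trans ?_
  have hF : 0 ≤ FF x := by rw [FF_eq x (by linarith)]; have : 0 < x := by linarith
                           positivity
  apply mul_le_of_le_one_right hF
  rw [Real.exp_le_one_iff]
  apply div_nonpos_of_nonpos_of_nonneg <;> linarith

theorem FF_upper (x : ℝ) (hx : 1 / 2 ≤ x) : FF x ≤ FF (1 / 2) * Real.exp (1 / 2) := by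
  have hd : ∀ t : ℝ, 0 < t → HasDerivAt (fun x => FF x * Real.exp (1 / (4 * x))) _ t :=
    fun t ht => (FF_deriv t ht).mul (exp_deriv 1 t ht)
  have h : AntitoneOn (fun x => FF x * Real.exp (1 / (4 * x))) (Set.Ici (1 / 2)) := by
    apply antitoneOn_of_deriv_nonpos (convex_Ici _)
    · intro t ht
      have : (1 : ℝ) / 2 ≤ t := ht
      exact (hd t (by linarith)).continuousAt.continuousWithinAt
    · intro t ht
      rw [interior_Ici] at ht
      have : (1 : ℝ) / 2 < t := ht
      exact (hd t (by linarith)).differentiableAt.differentiableWithinAt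
    · intro t ht
      rw [interior_Ici] at ht
      have ht2 : (1 : ℝ) / 2 < t := ht
      rw [(hd t (by linarith)).deriv]
      have := mul_nonpos_of_nonpos_of_nonneg (FF_bd2 t (by linarith)) (Real.exp_nonneg (1 / (4 * t)))
      refine le_trans (le_of_eq ?_) this
      ring
  have := h (Set.mem_Ici.mpr le_rfl) (Set.mem_Ici.mpr hx) hx
  simp only at this
  norm_num at this ⊢
  refine le_trans ?_ this
  have hF : 0 ≤ FF x := by rw [FF_eq x (by linarith)]; have : 0 < x := by linarith
                           positivity
  apply le_mul_of_one_le_right hF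
  rw [Real.one_le_exp_iff]
  positivity

theorem FF_half_pos : 0 < FF (1 / 2) := by
  rw [FF_eq _ (by norm_num)]
  have := J0_lower (1 / 2) (by norm_num)
  have h2 : 0 < J0 (1 / 2) := by linarith
  positivity

theorem J0_decay : ∃ C : ℝ, 1 ≤ C ∧ ∀ x, 0 ≤ x → x * J0 x ^ 2 ≤ C := by
  refine ⟨max 1 (FF (1 / 2) * Real.exp (1 / 2)), le_max_left _ _, ?_⟩
  intro x hx
  rcases le_or_gt (1 / 2) x with h | h
  · refine le_trans ?_ (le_max_right _ _)
    refine le_trans ?_ (FF_upper x h)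
    rw [FF_eq x (by linarith)]
    have : 0 ≤ x * (K0 x + J0 x / (2 * x)) ^ 2 := by positivity
    linarith
  · refine le_trans ?_ (le_max_left _ _)
    have := energy x hx
    nlinarith [sq_nonneg (K0 x), sq_nonneg (J0 x)]

theorem zero_gt (x : ℝ) (hx : 0 < x) (h : J0 x = 0) : 1 / 2 ≤ x := by
  have := J0_lower x hx.le
  linarith

theorem K0_at_zero : ∃ c : ℝ, 0 < c ∧ ∀ x, 0 < x → J0 x = 0 → c ≤ x * K0 x ^ 2 := by
  refine ⟨FF (1 / 2) * Real.exp (-1 / 2), mul_pos FF_half_pos (Real.exp_pos _), ?_⟩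
  intro x hx h
  have := FF_lower x (zero_gt x hx h)
  refine this.trans (le_of_eq ?_)
  simp [FF, h]

theorem L2_int (z : ℝ) (hz : 0 < z) (h : J0 z = 0) :
    ∫ r in (0 : ℝ)..1, (J0 (z * r)) ^ 2 * r = K0 z ^ 2 / 2 := by
  have cJ : Continuous fun r => J0 (z * r) := J0_cont.comp (by fun_prop)
  have cK : Continuous fun r => K0 (z * r) := K0_cont.comp (by fun_prop)
  have := intervalIntegral.integral_eq_sub_of_hasDerivAt_of_le (a := 0) (b := 1)
    (f := fun r => r ^ 2 * (J0 (z * r) ^ 2 + K0 (z * r) ^ 2) / 2)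
    (f' := fun r => (J0 (z * r)) ^ 2 * r) zero_le_one
    (by apply Continuous.continuousOn; fun_prop)
    (by
      intro r hr
      have hr0 : 0 < r := hr.1
      have hl : HasDerivAt (fun r => z * r) z r := by simpa using (hasDerivAt_id r).const_mul z
      have hJ := (J0_deriv (z * r)).comp r hl
      have hK := (K0_deriv (z * r) (by positivity)).comp r hl
      have := ((hasDerivAt_pow 2 r).mul ((hJ.fun_pow 2).add (hK.fun_pow 2))).div_const 2
      refine HasDerivAt.congr_deriv (this) ?_
      simp only [Function.comp, Pi.add_apply]
      push_cast
      field_simp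
      ring)
    (by apply Continuous.intervalIntegrable; fun_prop)
  rw [this]
  simp [h]

theorem next_zero (a : ℝ) (ha : 0 < a) (h : J0 a = 0) : ∃ x, a < x ∧ x ≤ a + Real.pi ∧ J0 x = 0 := by
  by_contra hcon
  push Not at hcon
  have hpi := Real.pi_pos
  set m := a + Real.pi with hm
  have hsign : ∀ x ∈ Set.Ioc a m, 0 < J0 x * J0 m := by
    intro x hx
    by_contra hneg
    have hneg : J0 x * J0 m ≤ 0 := not_lt.mp hneg
    have hmm : 0 < J0 m * J0 m := by
      exact mul_self_pos.mpr (hcon m (by linarith) le_rfl)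
    obtain ⟨t, ht, h0⟩ := intermediate_value_Icc hx.2
      ((J0_cont.mul continuous_const).continuousOn (f := fun x => J0 x * J0 m)) ⟨hneg, hmm.le⟩
    have := hcon t (lt_of_lt_of_le hx.1 ht.1) ht.2
    have hm0 := hcon m (by linarith) le_rfl
    simp only [mul_eq_zero] at h0
    tauto
  have hd : ∀ x, 0 < x → HasDerivAt (fun x => J0 m * (Real.sqrt x * (K0 x * Real.sin (x - a)
      + J0 x * Real.sin (x - a) / (2 * x) - J0 x * Real.cos (x - a))))
      (- (Real.sqrt x * (J0 x * J0 m) * Real.sin (x - a)) / (4 * x ^ 2)) x := by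
    intro x hx
    have hs : HasDerivAt (fun x => Real.sin (x - a)) (Real.cos (x - a)) x := by
      simpa using ((hasDerivAt_id x).sub_const a).sin
    have hc : HasDerivAt (fun x => Real.cos (x - a)) (- Real.sin (x - a)) x := by
      simpa using ((hasDerivAt_id x).sub_const a).cos
    have h2 : HasDerivAt (fun x : ℝ => 2 * x) 2 x := by simpa using (hasDerivAt_id x).const_mul 2
    have hJ := J0_deriv x
    have hK := K0_deriv x hx
    have hq := Real.hasDerivAt_sqrt hx.ne'
    have := (hq.fun_mul (((hK.fun_mul hs).fun_add ((hJ.fun_mul hs).fun_div h2 (by positivity))).fun_sub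
      (hJ.fun_mul hc))).const_mul (J0 m)
    refine HasDerivAt.congr_deriv (this) ?_
    have hsq : Real.sqrt x ^ 2 = x := Real.sq_sqrt hx.le
    have hsp : 0 < Real.sqrt x := Real.sqrt_pos.mpr hx
    set q := Real.sqrt x
    rw [← hsq]
    field_simp
    ring
  have hanti : StrictAntiOn (fun x => J0 m * (Real.sqrt x * (K0 x * Real.sin (x - a)
      + J0 x * Real.sin (x - a) / (2 * x) - J0 x * Real.cos (x - a)))) (Set.Icc a m) := by
    apply strictAntiOn_of_deriv_neg (convex_Icc a m)
    · intro x hx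
      exact (hd x (by linarith [hx.1])).continuousAt.continuousWithinAt
    · intro x hx
      rw [interior_Icc] at hx
      have hx0 : 0 < x := by linarith [hx.1]
      rw [(hd x hx0).deriv]
      have h1 := hsign x ⟨hx.1, hx.2.le⟩
      have h2 : 0 < Real.sin (x - a) := Real.sin_pos_of_pos_of_lt_pi (by linarith [hx.1])
        (by linarith [hx.2])
      have h3 : 0 < Real.sqrt x := Real.sqrt_pos.mpr hx0
      apply div_neg_of_neg_of_pos _ (by positivity)
      have : 0 < Real.sqrt x * (J0 x * J0 m) * Real.sin (x - a) := by positivity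
      linarith
  have := hanti (Set.left_mem_Icc.mpr (by linarith)) (Set.right_mem_Icc.mpr (by linarith))
    (show a < m by linarith)
  have e : m - a = Real.pi := by rw [hm]; ring
  simp only [e, h, sub_self, Real.sin_zero, Real.sin_pi, Real.cos_pi] at this
  have h1 := hsign m ⟨by linarith, le_rfl⟩
  have h3 : 0 ≤ Real.sqrt m := Real.sqrt_nonneg m
  norm_num at this
  nlinarith

theorem J0_rpow (C : ℝ) (hC : 1 ≤ C) (hdec : ∀ x, 0 ≤ x → x * J0 x ^ 2 ≤ C) (δ : ℝ) (hδ : 0 < δ)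
    (hδ1 : δ < 1) (x : ℝ) (hx : 0 < x) : J0 x ^ 2 ≤ C * x ^ (δ - 1) := by
  rcases le_total x 1 with h | h
  · have h1 : 1 ≤ x ^ (δ - 1) := Real.one_le_rpow_of_pos_of_le_one_of_nonpos hx h (by linarith)
    have := energy x hx.le
    nlinarith [sq_nonneg (K0 x)]
  · have h1 : x ^ (-1 : ℝ) ≤ x ^ (δ - 1) := Real.rpow_le_rpow_of_exponent_le h (by linarith)
    rw [Real.rpow_neg_one] at h1
    have h2 := hdec x hx.le
    calc J0 x ^ 2 = (x * J0 x ^ 2) * x⁻¹ := by field_simp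
      _ ≤ C * x ^ (δ - 1) := by gcongr

theorem core (C c : ℝ) (hC : 1 ≤ C) (hdec : ∀ x, 0 ≤ x → x * J0 x ^ 2 ≤ C) (hc : 0 < c)
    (δ : ℝ) (hδ : 0 < δ) (hδ1 : δ < 1) (a b Na Nb : ℝ) (ha : 0 < a) (hb : 0 < b)
    (hNa : Real.pi * c ≤ a * Na ^ 2) (hNb : Real.pi * c ≤ b * Nb ^ 2) :
    ∫ r in (0 : ℝ)..1, ((J0 (a * r) / Na) * (J0 (b * r) / Nb)) ^ 2 * r ≤
      C ^ 2 / (Real.pi * c) ^ 2 / δ * a ^ δ := by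
  have hpc : 0 < Real.pi * c := mul_pos Real.pi_pos hc
  set p := Real.pi * c
  have cJa : Continuous fun r => J0 (a * r) := J0_cont.comp (by fun_prop)
  have cJb : Continuous fun r => J0 (b * r) := J0_cont.comp (by fun_prop)
  have hNa2 : 0 < Na ^ 2 := by
    by_contra hcon
    have : Na ^ 2 ≤ 0 := not_lt.mp hcon
    nlinarith
  have hNb2 : 0 < Nb ^ 2 := by
    by_contra hcon
    have : Nb ^ 2 ≤ 0 := not_lt.mp hcon
    nlinarith
  have hmono : ∫ r in (0 : ℝ)..1, ((J0 (a * r) / Na) * (J0 (b * r) / Nb)) ^ 2 * r ≤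
      ∫ r in (0 : ℝ)..1, (C ^ 2 / p ^ 2 * a ^ δ) * r ^ (δ - 1) := by
    apply intervalIntegral.integral_mono_on zero_le_one
    · apply Continuous.intervalIntegrable
      exact (((cJa.div_const _).mul (cJb.div_const _)).pow 2).mul continuous_id
    · exact (intervalIntegral.intervalIntegrable_rpow' (by linarith)).const_mul _
    · intro r hr
      rcases hr.1.eq_or_lt with h | hr0
      · rw [← h, mul_zero]
        positivity
      have h1 := J0_rpow C hC hdec δ hδ hδ1 (a * r) (by positivity)
      rw [Real.mul_rpow ha.le hr0.le, Real.rpow_sub_one ha.ne'] at h1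
      have h2 := hdec (b * r) (by positivity)
      have h3 : J0 (a * r) ^ 2 / Na ^ 2 ≤ C * a ^ δ * r ^ (δ - 1) / p := by
        rw [div_le_div_iff₀ hNa2 hpc]
        have e : C * (a ^ δ / a * r ^ (δ - 1)) = C * a ^ δ * r ^ (δ - 1) / a := by ring
        rw [e, le_div_iff₀ ha] at h1
        calc J0 (a * r) ^ 2 * p ≤ J0 (a * r) ^ 2 * (a * Na ^ 2) := by gcongr
          _ = (J0 (a * r) ^ 2 * a) * Na ^ 2 := by ring
          _ ≤ _ := by gcongr
      have h4 : J0 (b * r) ^ 2 * r / Nb ^ 2 ≤ C / p := by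
        rw [div_le_div_iff₀ hNb2 hpc]
        calc J0 (b * r) ^ 2 * r * p ≤ J0 (b * r) ^ 2 * r * (b * Nb ^ 2) := by gcongr
          _ = (b * r * J0 (b * r) ^ 2) * Nb ^ 2 := by ring
          _ ≤ _ := by gcongr
      calc _ = (J0 (a * r) ^ 2 / Na ^ 2) * (J0 (b * r) ^ 2 * r / Nb ^ 2) := by
            rw [mul_pow, div_pow, div_pow]; ring
        _ ≤ (C * a ^ δ * r ^ (δ - 1) / p) * (C / p) := by gcongr
        _ = _ := by field_simp
  refine hmono.trans (le_of_eq ?_)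
  rw [intervalIntegral.integral_const_mul, integral_rpow (Or.inl (by linarith))]
  simp only [sub_add_cancel, Real.one_rpow, Real.zero_rpow hδ.ne']
  ring

/-- Bilinear eigenfunction estimate: for every `ε > 0` there is `C_ε` with
`‖e_{n₁} e_{n₂}‖_{L²(Θ)} ≤ C_ε (min(n₁,n₂))^ε` for all `n₁, n₂ ≥ 1`. -/
theorem eigenfunction_bilinear_L2
    (z : ℕ → ℝ)
    (hzpos : ∀ n, 1 ≤ n → 0 < z n)
    (hzmono : ∀ m n, 1 ≤ m → m < n → z m < z n)
    (hzzero : ∀ n, 1 ≤ n → J0 (z n) = 0)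
    (hzall : ∀ x : ℝ, 0 < x → J0 x = 0 → ∃ n, 1 ≤ n ∧ z n = x) :
    ∀ ε : ℝ, 0 < ε → ∃ C : ℝ, 0 < C ∧ ∀ n₁ n₂ : ℕ, 1 ≤ n₁ → 1 ≤ n₂ →
      Real.sqrt (2 * Real.pi * ∫ r in (0 : ℝ)..1, (efun z n₁ r * efun z n₂ r) ^ 2 * r) ≤
        C * ((min n₁ n₂ : ℕ) : ℝ) ^ ε := by
  intro ε hε
  obtain ⟨C, hC, hdec⟩ := J0_decay
  obtain ⟨c, hc, hK⟩ := K0_at_zero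
  have hpi := Real.pi_pos
  have hz1 := hzpos 1 le_rfl
  -- linear growth of the zeros
  have hgrow : ∀ n : ℕ, 1 ≤ n → z n ≤ (z 1 + Real.pi) * n := by
    intro n hn
    induction n, hn using Nat.le_induction with
    | base => push_cast; linarith
    | succ n hn ih =>
      obtain ⟨x, hx1, hx2, hx0⟩ := next_zero (z n) (hzpos n hn) (hzzero n hn)
      obtain ⟨m, hm, rfl⟩ := hzall x (by linarith [hzpos n hn]) hx0
      have hnm : n < m := by
        by_contra hcon
        rcases (not_lt.mp hcon).eq_or_lt with h | h
        · rw [h] at hx1; exact lt_irrefl _ hx1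
        · have := hzmono m n hm h
          linarith
      have : z (n + 1) ≤ z m := by
        rcases (Nat.succ_le_of_lt hnm).eq_or_lt with h | h
        · rw [← h]
        · exact (hzmono (n + 1) m (by omega) h).le
      push_cast
      nlinarith
  set δ := min ε (1 / 2) with hδdef
  have hδ : 0 < δ := lt_min hε (by norm_num)
  have hδ1 : δ < 1 := lt_of_le_of_lt (min_le_right _ _) (by norm_num)
  have hδε : δ ≤ ε := min_le_left _ _
  have hN : ∀ n, 1 ≤ n → Real.pi * c ≤ z n * besselL2 z n ^ 2 := by
    intro n hn
    have := hK (z n) (hzpos n hn) (hzzero n hn)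
    unfold besselL2
    rw [L2_int _ (hzpos n hn) (hzzero n hn), Real.sq_sqrt (by positivity)]
    nlinarith
  set D := 2 * Real.pi * (C ^ 2 / (Real.pi * c) ^ 2 / δ * (z 1 + Real.pi) ^ δ) with hD
  have hDpos : 0 < D := by positivity
  have main : ∀ n m : ℕ, 1 ≤ n → 1 ≤ m →
      Real.sqrt (2 * Real.pi * ∫ r in (0 : ℝ)..1, (efun z n r * efun z m r) ^ 2 * r) ≤
        Real.sqrt D * (n : ℝ) ^ ε := by
    intro n m hn hm
    have h1 := core C c hC hdec hc δ hδ hδ1 (z n) (z m) _ _ (hzpos n hn) (hzpos m hm)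
      (hN n hn) (hN m hm)
    have hn1 : (1 : ℝ) ≤ n := by exact_mod_cast hn
    have h2 : z n ^ δ ≤ (z 1 + Real.pi) ^ δ * (n : ℝ) ^ δ := by
      rw [← Real.mul_rpow (by positivity) (by positivity)]
      exact Real.rpow_le_rpow (hzpos n hn).le (hgrow n hn) hδ.le
    have h3 : (n : ℝ) ^ δ ≤ (n : ℝ) ^ ε := Real.rpow_le_rpow_of_exponent_le hn1 hδε
    have h4 : 1 ≤ (n : ℝ) ^ ε := Real.one_le_rpow hn1 hε.le
    have h5 : (n : ℝ) ^ δ ≤ ((n : ℝ) ^ ε) ^ 2 := by nlinarith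
    rw [Real.sqrt_le_iff]
    refine ⟨by positivity, ?_⟩
    rw [mul_pow, Real.sq_sqrt hDpos.le]
    unfold efun
    calc _ ≤ 2 * Real.pi * (C ^ 2 / (Real.pi * c) ^ 2 / δ * z n ^ δ) := by gcongr
      _ ≤ 2 * Real.pi * (C ^ 2 / (Real.pi * c) ^ 2 / δ *
            ((z 1 + Real.pi) ^ δ * ((n : ℝ) ^ ε) ^ 2)) := by
          gcongr
          exact h2.trans (by gcongr)
      _ = _ := by rw [hD]; ring
  refine ⟨Real.sqrt D, Real.sqrt_pos.mpr hDpos, ?_⟩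
  intro n₁ n₂ h₁ h₂
  rcases le_total n₁ n₂ with h | h
  · rw [min_eq_left h]
    exact main n₁ n₂ h₁ h₂
  · rw [min_eq_right h]
    have := main n₂ n₁ h₂ h₁
    simp only [mul_comm (efun z n₁ _)]
    exact this
end

section
/- For every ε > 0 there exists C_ε > 0 such that for every τ ∈ ℝ, all N₁, N₂ ≥ 1 and all L₁, L₂ ≥ 1, the set Λ(τ, L₁, L₂, N₁, N₂) = { (τ₁, n₁, n₂) ∈ ℝ × ℕ × ℕ : L₁ ≤ ⟨τ₁ + z_{n₁}²⟩ ≤ 2L₁, L₂ ≤ ⟨τ − τ₁ + z_{n₂}²⟩ ≤ 2L₂, ⟨z_{n₁}⟩ ∈ [N₁, 2N₁], ⟨z_{n₂}⟩ ∈ [N₂, 2N₂] } satisfies |Λ(τ, L₁, L₂, N₁, N₂)| ≤ C_ε (min(N₁, N₂))^ε L₁ L₂, where |Λ| denotes its measure with respect to the product of Lebesgue measure in τ₁ and counting measure in (n₁, n₂). -/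
open MeasureTheory

namespace BesselAux

open Real

lemma prod_half (j : ℕ) : ∏ i ∈ Finset.range j, (2 * (i : ℝ) + 1) / (2 * i + 2)
    = ((2 * j).factorial : ℝ) / (4 ^ j * (j.factorial : ℝ) ^ 2) := by
  induction j with
  | zero => simp
  | succ k ih =>
    rw [Finset.prod_range_succ, ih]
    have h1 : (2 * (k + 1)).factorial = (2 * k + 2) * ((2 * k + 1) * (2 * k).factorial) := by
      rw [show 2 * (k + 1) = (2 * k + 1) + 1 by ring, Nat.factorial_succ, Nat.factorial_succ]
    rw [h1, Nat.factorial_succ]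
    have h2 : (k.factorial : ℝ) ≠ 0 := by positivity
    push_cast
    field_simp
    ring

lemma J0_eq (x : ℝ) : J0 x = (1 / π) * ∫ θ in (0 : ℝ)..π, cos (x * sin θ) := by
  have key : HasSum (fun j : ℕ => ∫ θ in (0 : ℝ)..π,
      (-1 : ℝ) ^ j * (x * sin θ) ^ (2 * j) / ((2 * j).factorial : ℝ))
      (∫ θ in (0 : ℝ)..π, cos (x * sin θ)) := by
    have hs : Summable (fun j : ℕ => |x| ^ (2 * j) / ((2 * j).factorial : ℝ)) :=
      (Real.summable_pow_div_factorial |x|).comp_injective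
        (i := fun j : ℕ => 2 * j) (fun a b h => by simpa using h)
    refine intervalIntegral.hasSum_integral_of_dominated_convergence
      (fun j _ => |x| ^ (2 * j) / ((2 * j).factorial : ℝ)) ?_ ?_ ?_ ?_ ?_
    · intro n
      exact (by fun_prop : Continuous _).aestronglyMeasurable
    · intro n
      refine Filter.Eventually.of_forall fun t _ => ?_
      rw [norm_div, norm_mul, norm_pow, norm_pow, norm_neg, norm_one, one_pow, one_mul,
        norm_mul, Real.norm_eq_abs, Real.norm_eq_abs, Real.norm_eq_abs, Nat.abs_cast]
      gcongr
      calc |x| * |sin t| ≤ |x| * 1 := by gcongr; exact abs_sin_le_one t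
        _ = |x| := mul_one _
    · exact Filter.Eventually.of_forall fun t _ => hs
    · exact intervalIntegrable_const
    · exact Filter.Eventually.of_forall fun t _ => Real.hasSum_cos _
  have h2 : ∀ j : ℕ, (∫ θ in (0 : ℝ)..π,
      (-1 : ℝ) ^ j * (x * sin θ) ^ (2 * j) / ((2 * j).factorial : ℝ))
      = π * (((-1 : ℝ) ^ j / ((Nat.factorial j : ℝ)) ^ 2) * (x / 2) ^ (2 * j)) := by
    intro j
    have : ∀ θ : ℝ, (-1 : ℝ) ^ j * (x * sin θ) ^ (2 * j) / ((2 * j).factorial : ℝ)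
      = ((-1 : ℝ) ^ j * x ^ (2 * j) / ((2 * j).factorial : ℝ)) * sin θ ^ (2 * j) := by
      intro θ; rw [mul_pow]; ring
    simp_rw [this]
    rw [intervalIntegral.integral_const_mul, integral_sin_pow_even, prod_half]
    have h3 : ((2 * j).factorial : ℝ) ≠ 0 := by positivity
    have h4 : (j.factorial : ℝ) ≠ 0 := by positivity
    rw [div_pow, pow_mul 2 2 j]
    norm_num
    field_simp
  simp_rw [h2] at key
  have h3 := key.tsum_eq
  rw [tsum_mul_left] at h3
  rw [← h3, J0]
  field_simp

noncomputable def D1 (x : ℝ) : ℝ := -((1 / π) * ∫ θ in (0 : ℝ)..π, sin θ * sin (x * sin θ))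
noncomputable def D2 (x : ℝ) : ℝ := -((1 / π) * ∫ θ in (0 : ℝ)..π, sin θ ^ 2 * cos (x * sin θ))

lemma hasDerivAt_J0 (x : ℝ) : HasDerivAt J0 (D1 x) x := by
  have h := (intervalIntegral.hasDerivAt_integral_of_dominated_loc_of_deriv_le
    (μ := volume) (a := 0) (b := π)
    (F := fun x θ => cos (x * sin θ)) (F' := fun x θ => -(sin θ * sin (x * sin θ)))
    (x₀ := x) (s := Set.univ) (bound := fun _ => 1) Filter.univ_mem
    (Filter.Eventually.of_forall fun y => (by fun_prop : Continuous _).aestronglyMeasurable)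
    ((by fun_prop : Continuous _).intervalIntegrable _ _)
    ((by fun_prop : Continuous _).aestronglyMeasurable)
    (Filter.Eventually.of_forall fun t _ y _ => by
      rw [norm_neg, norm_mul]
      exact mul_le_one₀ (abs_sin_le_one _) (norm_nonneg _) (abs_sin_le_one _))
    intervalIntegrable_const
    (Filter.Eventually.of_forall fun t _ y _ => by
      have := ((hasDerivAt_id y).mul_const (sin t)).cos
      simp only [id] at this
      convert! this using 1
      ring)).2
  have h2 := h.const_mul (1 / π)
  rw [intervalIntegral.integral_neg, mul_neg] at h2
  have : J0 = fun x => (1 / π) * ∫ θ in (0 : ℝ)..π, cos (x * sin θ) := funext J0_eq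
  rw [this]
  exact h2

lemma hasDerivAt_D1 (x : ℝ) : HasDerivAt D1 (D2 x) x := by
  have h := (intervalIntegral.hasDerivAt_integral_of_dominated_loc_of_deriv_le
    (μ := volume) (a := 0) (b := π)
    (F := fun x θ => sin θ * sin (x * sin θ)) (F' := fun x θ => sin θ ^ 2 * cos (x * sin θ))
    (x₀ := x) (s := Set.univ) (bound := fun _ => 1) Filter.univ_mem
    (Filter.Eventually.of_forall fun y => (by fun_prop : Continuous _).aestronglyMeasurable)
    ((by fun_prop : Continuous _).intervalIntegrable _ _)
    ((by fun_prop : Continuous _).aestronglyMeasurable)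
    (Filter.Eventually.of_forall fun t _ y _ => by
      rw [norm_mul, norm_pow]
      exact mul_le_one₀ (pow_le_one₀ (norm_nonneg _) (abs_sin_le_one _)) (norm_nonneg _)
        (abs_cos_le_one _))
    intervalIntegrable_const
    (Filter.Eventually.of_forall fun t _ y _ => by
      have := (((hasDerivAt_id y).mul_const (sin t)).sin).const_mul (sin t)
      simp only [id] at this
      convert! this using 1
      ring)).2
  exact (h.const_mul (1 / π)).neg

lemma ode (x : ℝ) : x * (D2 x + J0 x) = - D1 x := by
  have h := intervalIntegral.integral_eq_sub_of_hasDerivAt (a := 0) (b := π)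
    (f := fun θ => cos θ * sin (x * sin θ))
    (f' := fun θ => -(sin θ * sin (x * sin θ)) + x * (cos (x * sin θ) - sin θ ^ 2 * cos (x * sin θ)))
    (fun t _ => by
      have := (hasDerivAt_cos t).mul ((hasDerivAt_sin t).const_mul x).sin
      convert! this using 1
      have h1 : sin t ^ 2 = 1 - cos t ^ 2 := by rw [sin_sq]
      rw [h1]
      ring)
    ((by fun_prop : Continuous _).intervalIntegrable _ _)
  rw [intervalIntegral.integral_add ((by fun_prop : Continuous _).intervalIntegrable _ _)
    ((by fun_prop : Continuous _).intervalIntegrable _ _), intervalIntegral.integral_neg,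
    intervalIntegral.integral_const_mul,
    intervalIntegral.integral_sub ((by fun_prop : Continuous _).intervalIntegrable _ _)
    ((by fun_prop : Continuous _).intervalIntegrable _ _)] at h
  simp only [sin_pi, sin_zero, mul_zero, sub_zero] at h
  rw [J0_eq, D1, D2]
  linear_combination (1 / π) * h

noncomputable def En (x : ℝ) : ℝ := J0 x ^ 2 + D1 x ^ 2

lemma hasDerivAt_En (x : ℝ) : HasDerivAt En (2 * J0 x * D1 x + 2 * D1 x * D2 x) x := by
  have := ((hasDerivAt_J0 x).pow 2).add ((hasDerivAt_D1 x).pow 2)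
  convert! this using 1
  simp

lemma En_anti {a b : ℝ} (ha : 0 < a) (hab : a ≤ b) : En b ≤ En a := by
  have : AntitoneOn En (Set.Ici a) := by
    refine antitoneOn_of_deriv_nonpos (convex_Ici a)
      (fun x _ => (hasDerivAt_En x).continuousAt.continuousWithinAt)
      (fun x _ => (hasDerivAt_En x).differentiableAt.differentiableWithinAt) ?_
    intro x hx
    rw [interior_Ici] at hx
    have hx0 : 0 < x := ha.trans hx
    rw [(hasDerivAt_En x).deriv]
    have h := ode x
    have h2 : x * (2 * J0 x * D1 x + 2 * D1 x * D2 x) = - 2 * D1 x ^ 2 := by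
      linear_combination 2 * D1 x * h
    by_contra hc
    push Not at hc
    nlinarith [mul_pos hx0 hc, sq_nonneg (D1 x)]
  exact this (Set.mem_Ici.2 le_rfl) (Set.mem_Ici.2 hab) hab

lemma sqEn_mono {a b : ℝ} (ha : 0 < a) (hab : a ≤ b) : a ^ 2 * En a ≤ b ^ 2 * En b := by
  have hd : ∀ x, HasDerivAt (fun x => x ^ 2 * En x)
      (2 * x * En x + x ^ 2 * (2 * J0 x * D1 x + 2 * D1 x * D2 x)) x := by
    intro x
    have := (hasDerivAt_pow 2 x).mul (hasDerivAt_En x)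
    convert! this using 1
    simp
  have : MonotoneOn (fun x => x ^ 2 * En x) (Set.Ici a) := by
    refine monotoneOn_of_deriv_nonneg (convex_Ici a)
      (fun x _ => (hd x).continuousAt.continuousWithinAt)
      (fun x _ => (hd x).differentiableAt.differentiableWithinAt) ?_
    intro x hx
    rw [interior_Ici] at hx
    have hx0 : 0 < x := ha.trans hx
    rw [(hd x).deriv]
    have h := ode x
    have h2 : 2 * x * En x + x ^ 2 * (2 * J0 x * D1 x + 2 * D1 x * D2 x) = 2 * x * J0 x ^ 2 := by
      rw [En]
      linear_combination 2 * x * D1 x * h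
    rw [h2]
    positivity
  exact this (Set.mem_Ici.2 le_rfl) (Set.mem_Ici.2 hab) hab

lemma J0_zero : J0 0 = 1 := by
  rw [J0_eq]; simp

lemma En_pos {a : ℝ} (ha : 0 < a) : 0 < En a := by
  by_contra hc
  have h0 : En a = 0 := le_antisymm (not_lt.1 hc) (by rw [En]; positivity)
  have h1 : ∀ x, 0 < x → x ≤ a → J0 x = 0 := by
    intro x hx hxa
    have h2 := sqEn_mono hx hxa
    rw [h0, mul_zero] at h2
    have h3 : En x ≤ 0 := by
      by_contra h; push Not at h
      have : 0 < x ^ 2 * En x := by positivity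
      linarith
    rw [En] at h3
    have : J0 x ^ 2 = 0 := by nlinarith [sq_nonneg (J0 x), sq_nonneg (D1 x)]
    simpa using this
  have hc : Filter.Tendsto J0 (nhdsWithin 0 (Set.Ioi 0)) (nhds (J0 0)) :=
    (hasDerivAt_J0 0).continuousAt.continuousWithinAt
  have hc2 : Filter.Tendsto J0 (nhdsWithin 0 (Set.Ioi 0)) (nhds 0) := by
    refine tendsto_const_nhds.congr' ?_
    filter_upwards [Ioc_mem_nhdsGT ha] with x hx
    exact (h1 x hx.1 hx.2).symm
  have := tendsto_nhds_unique hc hc2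
  rw [J0_zero] at this
  norm_num at this

lemma gap {a b : ℝ} (ha : 0 < a) (hab : a < b) (hJa : J0 a = 0) (hJb : J0 b = 0) :
    a ≤ b * (b - a) := by
  obtain ⟨c, hc, hc0⟩ := exists_hasDerivAt_eq_zero (f := J0) (f' := D1) hab
    (fun x _ => (hasDerivAt_J0 x).continuousAt.continuousWithinAt) (hJa.trans hJb.symm)
    (fun x _ => hasDerivAt_J0 x)
  obtain ⟨d, hd, hd0⟩ := exists_hasDerivAt_eq_slope J0 D1 hc.1
    (fun x _ => (hasDerivAt_J0 x).continuousAt.continuousWithinAt)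
    (fun x _ => hasDerivAt_J0 x)
  have hca : 0 < c - a := sub_pos.2 hc.1
  have hJc : J0 c = D1 d * (c - a) := by
    rw [hd0, hJa]; field_simp; ring
  have hEc : En c = D1 d ^ 2 * (c - a) ^ 2 := by
    rw [En, hc0, hJc]; ring
  have h1 : D1 d ^ 2 ≤ En a := by
    have := En_anti ha hd.1.le
    rw [En] at this
    nlinarith [sq_nonneg (J0 d)]
  have h2 := sqEn_mono ha hc.1.le
  have hpos := En_pos ha
  have h3 : a ^ 2 * En a ≤ (c * (c - a)) ^ 2 * En a := by
    calc _ ≤ _ := h2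
      _ = (c * (c - a)) ^ 2 * D1 d ^ 2 := by rw [hEc]; ring
      _ ≤ _ := by gcongr
  have h4 : a ^ 2 ≤ (c * (c - a)) ^ 2 := le_of_mul_le_mul_right h3 hpos
  have hc0 : 0 < c := ha.trans hc.1
  have h5 : a ≤ c * (c - a) := by
    refine (pow_le_pow_iff_left₀ ha.le (by positivity) two_ne_zero).1 h4
  have : c ≤ b := hc.2.le
  calc a ≤ _ := h5
    _ ≤ b * (b - a) := by gcongr; linarith

end BesselAux

namespace BesselAux

open Real Filter Topology

noncomputable def Fc (x : ℝ) (w : ℂ) : ℂ :=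
  Complex.exp (Complex.I * x * w) * ((1 - w) ^ (((-1 / 2 : ℝ)) : ℂ) * (1 + w) ^ (((-1 / 2 : ℝ)) : ℂ))

lemma norm_Fc (x : ℝ) (w : ℂ) :
    ‖Fc x w‖ = rexp (-(x * w.im)) * (‖1 - w‖ ^ (-1 / 2 : ℝ) * ‖1 + w‖ ^ (-1 / 2 : ℝ)) := by
  rw [Fc, norm_mul, norm_mul, Complex.norm_cpow_real, Complex.norm_cpow_real, Complex.norm_exp]
  simp

lemma Fc_diff (x : ℝ) {w : ℂ} (h1 : 1 - w ∈ Complex.slitPlane) (h2 : 1 + w ∈ Complex.slitPlane) :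
    DifferentiableAt ℂ (Fc x) w := by
  unfold Fc
  refine DifferentiableAt.mul (by fun_prop) (DifferentiableAt.mul ?_ ?_)
  · exact DifferentiableAt.cpow_const (by fun_prop) h1
  · exact DifferentiableAt.cpow_const (by fun_prop) h2

lemma slit_of_im {w : ℂ} (h : 0 < w.im) : 1 - w ∈ Complex.slitPlane ∧ 1 + w ∈ Complex.slitPlane := by
  simp only [Complex.mem_slitPlane_iff, Complex.sub_im, Complex.add_im, Complex.one_im]
  exact ⟨Or.inr (by simp; exact h.ne'), Or.inr (by simp; exact h.ne')⟩

lemma slit_of_re {t : ℝ} (h : t ∈ Set.Ioo (-1 : ℝ) 1) :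
    1 - (t : ℂ) ∈ Complex.slitPlane ∧ 1 + (t : ℂ) ∈ Complex.slitPlane := by
  simp only [Complex.mem_slitPlane_iff, Complex.sub_re, Complex.add_re, Complex.one_re,
    Complex.ofReal_re]
  exact ⟨Or.inl (by linarith [h.2]), Or.inl (by linarith [h.1])⟩

lemma image_sin : sin '' Set.Ioo (-(π / 2)) (π / 2) = Set.Ioo (-1) 1 := by
  ext t
  constructor
  · rintro ⟨θ, hθ, rfl⟩
    constructor
    · have := sin_lt_sin_of_lt_of_le_pi_div_two le_rfl hθ.2.le hθ.1
      simpa using this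
    · have := sin_lt_sin_of_lt_of_le_pi_div_two hθ.1.le le_rfl hθ.2
      simpa using this
  · intro ht
    exact ⟨arcsin t, ⟨neg_pi_div_two_lt_arcsin.2 ht.1, arcsin_lt_pi_div_two.2 ht.2⟩,
      sin_arcsin ht.1.le ht.2.le⟩

lemma Fc_sin (x : ℝ) {θ : ℝ} (h : θ ∈ Set.Ioo (-(π / 2)) (π / 2)) :
    |cos θ| • Fc x (sin θ : ℝ) = Complex.exp (Complex.I * x * (sin θ : ℝ)) := by
  have hc : 0 < cos θ := cos_pos_of_mem_Ioo h
  have hs : sin θ ∈ Set.Ioo (-1 : ℝ) 1 := by rw [← image_sin]; exact ⟨θ, h, rfl⟩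
  have h1 : 0 ≤ 1 - sin θ := by linarith [hs.2]
  have h2 : 0 ≤ 1 + sin θ := by linarith [hs.1]
  rw [Fc, show (1 - ((sin θ : ℝ) : ℂ)) = ((1 - sin θ : ℝ) : ℂ) by push_cast; rfl,
    show (1 + ((sin θ : ℝ) : ℂ)) = ((1 + sin θ : ℝ) : ℂ) by push_cast; rfl,
    ← Complex.ofReal_cpow h1, ← Complex.ofReal_cpow h2, ← Complex.ofReal_mul,
    ← Real.mul_rpow h1 h2]
  have h3 : (1 - sin θ) * (1 + sin θ) = cos θ ^ (2 : ℝ) := by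
    rw [Real.rpow_two, cos_sq']; ring
  rw [h3, ← Real.rpow_mul hc.le, abs_of_pos hc]
  norm_num
  rw [Real.rpow_neg_one]
  have : (Complex.cos θ) ≠ 0 := by
    rw [← Complex.ofReal_cos]; exact_mod_cast hc.ne'
  push_cast
  field_simp

lemma sin_deriv_within (θ : ℝ) (s : Set ℝ) : HasDerivWithinAt sin (cos θ) s θ :=
  (hasDerivAt_sin θ).hasDerivWithinAt

lemma inj_sin : Set.InjOn sin (Set.Ioo (-(π / 2)) (π / 2)) :=
  injOn_sin.mono Set.Ioo_subset_Icc_self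

lemma Fc_integrable (x : ℝ) : IntegrableOn (fun t : ℝ => Fc x t) (Set.Ioo (-1) 1) := by
  rw [← image_sin, integrableOn_image_iff_integrableOn_abs_deriv_smul measurableSet_Ioo
    (fun θ _ => sin_deriv_within θ _) inj_sin]
  rw [integrableOn_congr_fun (fun θ hθ => Fc_sin x hθ) measurableSet_Ioo]
  refine IntegrableOn.mono_set (t := Set.Icc (-(π / 2)) (π / 2)) ?_ Set.Ioo_subset_Icc_self
  exact (by fun_prop : Continuous _).integrableOn_Icc

lemma Fc_integral_re (x : ℝ) : (∫ t in Set.Ioo (-1 : ℝ) 1, Fc x t).re = π * J0 x := by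
  rw [← image_sin, integral_image_eq_integral_abs_deriv_smul measurableSet_Ioo
    (fun θ _ => sin_deriv_within θ _) inj_sin]
  rw [setIntegral_congr_fun measurableSet_Ioo (fun θ hθ => Fc_sin x hθ)]
  have hint : IntegrableOn (fun θ : ℝ => Complex.exp (Complex.I * x * (sin θ : ℝ)))
      (Set.Ioo (-(π / 2)) (π / 2)) := by
    refine IntegrableOn.mono_set (t := Set.Icc (-(π / 2)) (π / 2)) ?_ Set.Ioo_subset_Icc_self
    exact (by fun_prop : Continuous _).integrableOn_Icc
  have h1 := integral_re hint
  simp only [RCLike.re_eq_complex_re] at h1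
  rw [← h1, J0_eq]
  have h2 : ∀ θ : ℝ, (Complex.exp (Complex.I * x * (sin θ : ℝ))).re = cos (x * sin θ) := by
    intro θ
    rw [Complex.exp_re]
    simp [-Complex.ofReal_sin]
  simp_rw [h2]
  have hper : Function.Periodic (fun θ => cos (x * sin θ)) π := by
    intro θ
    simp [sin_add_pi]
  have h3 := hper.intervalIntegral_add_eq (-(π / 2)) 0
  rw [show -(π / 2) + π = π / 2 by ring, zero_add] at h3
  rw [← h3, intervalIntegral.integral_of_le (by linarith [pi_pos]), integral_Ioc_eq_integral_Ioo]
  field_simp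

lemma Fc_conj (x : ℝ) {y : ℝ} (hy : 0 < y) :
    Fc x ((-1 : ℝ) + y * Complex.I) = (starRingEnd ℂ) (Fc x ((1 : ℝ) + y * Complex.I)) := by
  obtain ⟨h1, h2⟩ := slit_of_im (w := ((1 : ℝ) : ℂ) + y * Complex.I) (by simpa using hy)
  have e : ∀ w : ℂ, w ∈ Complex.slitPlane → (starRingEnd ℂ) (w ^ (((-1 / 2 : ℝ)) : ℂ))
      = (starRingEnd ℂ) w ^ (((-1 / 2 : ℝ)) : ℂ) := by
    intro w hw
    rw [Complex.conj_cpow _ _ (Complex.mem_slitPlane_iff_arg.1 hw).1, Complex.conj_ofReal]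
  rw [Fc, Fc, map_mul, map_mul, e _ h1, e _ h2, ← Complex.exp_conj]
  rw [mul_comm ((1 - _) ^ _)]
  congr 1
  · congr 1
    apply Complex.ext <;> simp
  · congr 2
    · apply Complex.ext <;> simp
    · apply Complex.ext <;> simp

lemma rect_id (x : ℝ) {δ R : ℝ} (hδ : 0 < δ) (hR : δ < R) :
    (∫ t in Set.Ioo (-1 : ℝ) 1, Fc x (t + δ * Complex.I)) -
      (∫ t in (-1 : ℝ)..1, Fc x (t + R * Complex.I)) =
    ((2 * (∫ y in Set.Ioc δ R, Fc x ((1 : ℝ) + y * Complex.I)).im : ℝ) : ℂ) := by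
  have hd : DifferentiableOn ℂ (Fc x) (Set.uIcc (-1 : ℝ) 1 ×ℂ Set.uIcc δ R) := by
    intro w hw
    have hw2 : w.im ∈ Set.uIcc δ R := hw.2
    rw [Set.uIcc_of_le hR.le] at hw2
    obtain ⟨h1, h2⟩ := slit_of_im (w := w) (hδ.trans_le hw2.1)
    exact (Fc_diff x h1 h2).differentiableWithinAt
  have h := Complex.integral_boundary_rect_eq_zero_of_differentiableOn (Fc x)
    ⟨-1, δ⟩ ⟨1, R⟩ hd
  simp only at h
  rw [intervalIntegral.integral_of_le (by norm_num), integral_Ioc_eq_integral_Ioo,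
    intervalIntegral.integral_of_le hR.le, intervalIntegral.integral_of_le hR.le] at h
  have h2 : (∫ y in Set.Ioc δ R, Fc x ((-1 : ℝ) + y * Complex.I)) =
      (starRingEnd ℂ) (∫ y in Set.Ioc δ R, Fc x ((1 : ℝ) + y * Complex.I)) := by
    rw [← integral_conj]
    exact setIntegral_congr_fun measurableSet_Ioc fun y hy => Fc_conj x (hδ.trans hy.1)
  rw [h2] at h
  set V := (∫ y in Set.Ioc δ R, Fc x ((1 : ℝ) + y * Complex.I))
  have h3 : V - (starRingEnd ℂ) V = ((2 * V.im : ℝ) : ℂ) * Complex.I := by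
    rw [Complex.sub_conj]
  simp only [smul_eq_mul] at h
  linear_combination h - Complex.I * h3 - ((2 * V.im : ℝ) : ℂ) * Complex.I_sq

/-- the kernel -/
noncomputable def ker (x y : ℝ) : ℝ := y ^ (-1 / 2 : ℝ) * rexp (-(x * y))

lemma Fc_right (x : ℝ) {y : ℝ} (hy : 0 < y) : Fc x ((1 : ℝ) + y * Complex.I) =
    Complex.exp ((x + π / 4 : ℝ) * Complex.I) *
      ((ker x y : ℂ) * (2 + y * Complex.I) ^ (((-1 / 2 : ℝ)) : ℂ)) := by
  have h1 : (1 - (((1 : ℝ) : ℂ) + y * Complex.I)) ^ (((-1 / 2 : ℝ)) : ℂ) =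
      ((y ^ (-1 / 2 : ℝ) : ℝ) : ℂ) * Complex.exp ((π / 4 : ℝ) * Complex.I) := by
    rw [show (1 - (((1 : ℝ) : ℂ) + y * Complex.I)) = (y : ℂ) * (-Complex.I) by push_cast; ring]
    rw [Complex.cpow_def_of_ne_zero (by simp [hy.ne']), Complex.log_ofReal_mul hy (by simp),
      Complex.log_neg_I, add_mul, Complex.exp_add, Real.rpow_def_of_pos hy]
    push_cast
    congr 2
    ring
  rw [Fc, h1, ker]
  have h2 : Complex.exp (Complex.I * x * (((1 : ℝ) : ℂ) + y * Complex.I)) =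
      Complex.exp (x * Complex.I) * ((rexp (-(x * y)) : ℝ) : ℂ) := by
    push_cast
    rw [← Complex.exp_add]
    congr 1
    linear_combination (x : ℂ) * y * Complex.I_sq
  rw [h2, show (1 + (((1 : ℝ) : ℂ) + y * Complex.I)) = 2 + y * Complex.I by push_cast; ring]
  have h3 : Complex.exp ((x + π / 4 : ℝ) * Complex.I) =
      Complex.exp (x * Complex.I) * Complex.exp ((π / 4 : ℝ) * Complex.I) := by
    rw [← Complex.exp_add]; congr 1; push_cast; ring
  rw [h3]
  push_cast
  ring

lemma ker_int {x : ℝ} (hx : 0 < x) : IntegrableOn (ker x) (Set.Ioi 0) := by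
  have := integrableOn_rpow_mul_exp_neg_mul_rpow (p := 1) (s := -1 / 2) (b := x)
    (by norm_num) one_pos hx
  refine this.congr_fun (fun y _ => ?_) measurableSet_Ioi
  simp [ker]

lemma ker_mul_int {x : ℝ} (hx : 0 < x) : IntegrableOn (fun y => y * ker x y) (Set.Ioi 0) := by
  have := integrableOn_rpow_mul_exp_neg_mul_rpow (p := 1) (s := 1 / 2) (b := x)
    (by norm_num) one_pos hx
  refine this.congr_fun (fun y hy => ?_) measurableSet_Ioi
  have hy : 0 < y := hy
  simp only [ker, rpow_one]
  rw [← mul_assoc, show (1 / 2 : ℝ) = 1 + (-1 / 2) by norm_num, Real.rpow_add hy, rpow_one]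
  simp

lemma ker_integral {x : ℝ} (hx : 0 < x) :
    ∫ y in Set.Ioi (0 : ℝ), ker x y = (1 / x) ^ (1 / 2 : ℝ) * Real.Gamma (1 / 2) := by
  rw [← Real.integral_rpow_mul_exp_neg_mul_Ioi (by norm_num) hx]
  refine setIntegral_congr_fun measurableSet_Ioi fun y hy => ?_
  norm_num [ker]

lemma ker_mul_integral {x : ℝ} (hx : 0 < x) :
    ∫ y in Set.Ioi (0 : ℝ), y * ker x y = (1 / x) ^ (3 / 2 : ℝ) * Real.Gamma (3 / 2) := by
  rw [← Real.integral_rpow_mul_exp_neg_mul_Ioi (by norm_num) hx]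
  refine setIntegral_congr_fun measurableSet_Ioi fun y hy => ?_
  have hy : 0 < y := hy
  simp only [ker]
  rw [← mul_assoc, show (3 / 2 - 1 : ℝ) = 1 + (-1 / 2) by norm_num, Real.rpow_add hy, rpow_one]

lemma two_add_norm (y : ℝ) : 1 ≤ ‖(2 : ℂ) + y * Complex.I‖ := by
  have := Complex.abs_re_le_norm ((2 : ℂ) + y * Complex.I)
  simp at this
  linarith

lemma cpow_diff {y : ℝ} (hy : 0 < y) :
    ‖((2 : ℂ) + y * Complex.I) ^ (((-1 / 2 : ℝ)) : ℂ) - (2 : ℂ) ^ (((-1 / 2 : ℝ)) : ℂ)‖ ≤ y := by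
  have h := Convex.norm_image_sub_le_of_norm_hasDerivWithin_le (𝕜 := ℂ)
    (f := fun w : ℂ => w ^ (((-1 / 2 : ℝ)) : ℂ))
    (f' := fun w : ℂ => (((-1 / 2 : ℝ)) : ℂ) * w ^ ((((-1 / 2 : ℝ)) : ℂ) - 1) * 1)
    (s := {w : ℂ | 1 ≤ w.re}) (x := 2) (y := 2 + y * Complex.I) (C := 1)
    (fun w hw => by
      have hw : 1 ≤ w.re := hw
      exact ((hasDerivAt_id w).cpow_const
        (Complex.mem_slitPlane_iff.2 (Or.inl (by simp; linarith)))).hasDerivWithinAt)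
    (fun w hw => by
      have hw : 1 ≤ w.re := hw
      have hw2 : 1 ≤ ‖w‖ := hw.trans ((le_abs_self _).trans (Complex.abs_re_le_norm w))
      rw [show ((((-1 / 2 : ℝ)) : ℂ) - 1) = ((-3 / 2 : ℝ) : ℂ) by push_cast; norm_num,
        mul_one, norm_mul, Complex.norm_cpow_real, Complex.norm_real]
      have : ‖w‖ ^ (-3 / 2 : ℝ) ≤ 1 := Real.rpow_le_one_of_one_le_of_nonpos hw2 (by norm_num)
      have h0 : ‖(-1 / 2 : ℝ)‖ ≤ 1 := by norm_num
      exact mul_le_one₀ h0 (by positivity) this)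
    (convex_halfSpace_re_ge 1) (by simp) (by simp)
  simp only [add_sub_cancel_left, one_mul, norm_mul, Complex.norm_real, Complex.norm_I,
    mul_one, Real.norm_eq_abs, abs_of_pos hy] at h
  exact h

lemma cpow_cont : ContinuousOn (fun y : ℝ => ((2 : ℂ) + y * Complex.I) ^ (((-1 / 2 : ℝ)) : ℂ))
    (Set.Ioi 0) := by
  intro y _
  refine ContinuousAt.continuousWithinAt ?_
  refine ContinuousAt.cpow (by fun_prop) (by fun_prop) ?_
  simp [Complex.mem_slitPlane_iff]

lemma right_int {x : ℝ} (hx : 0 < x) : IntegrableOn (fun y : ℝ => (ker x y : ℂ) *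
    ((2 : ℂ) + y * Complex.I) ^ (((-1 / 2 : ℝ)) : ℂ)) (Set.Ioi 0) := by
  refine Integrable.mul_bdd (c := 1) (ker_int hx).ofReal
    (cpow_cont.aestronglyMeasurable measurableSet_Ioi) ?_
  refine Eventually.of_forall fun y => ?_
  rw [Complex.norm_cpow_real]
  exact Real.rpow_le_one_of_one_le_of_nonpos (two_add_norm y) (by norm_num)

lemma right_int' {x : ℝ} (hx : 0 < x) :
    IntegrableOn (fun y : ℝ => Fc x ((1 : ℝ) + y * Complex.I)) (Set.Ioi 0) := by
  have h := (right_int hx).const_mul (Complex.exp ((x + π / 4 : ℝ) * Complex.I))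
  exact IntegrableOn.congr_fun h (fun y hy => (Fc_right x hy).symm) measurableSet_Ioi

lemma contour {x : ℝ} (hx : 0 < x) :
    π * J0 x = 2 * (∫ y in Set.Ioi (0 : ℝ), Fc x ((1 : ℝ) + y * Complex.I)).im := by
  set δ : ℕ → ℝ := fun n => 1 / ((n : ℝ) + 2) with hδ
  set R : ℕ → ℝ := fun n => (n : ℝ) + 1 with hRdef
  have hδ0 : ∀ n, 0 < δ n := fun n => by simp only [hδ]; positivity
  have hR1 : ∀ n, 1 ≤ R n := fun n => by simp [hRdef]
  have hδR : ∀ n, δ n < R n := fun n => by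
    refine lt_of_lt_of_le ?_ (hR1 n)
    simp only [hδ]
    rw [div_lt_one (by positivity)]
    have : (0 : ℝ) ≤ n := Nat.cast_nonneg n
    linarith
  have hRt : Tendsto R atTop atTop :=
    tendsto_atTop_add_const_right _ _ tendsto_natCast_atTop_atTop
  have hδt : Tendsto δ atTop (𝓝 0) := by
    have : Tendsto (fun n : ℕ => (n : ℝ) + 2) atTop atTop :=
      tendsto_atTop_add_const_right _ _ tendsto_natCast_atTop_atTop
    refine this.inv_tendsto_atTop.congr fun n => ?_
    simp [hδ]
  -- bottom
  have hB : Tendsto (fun n => ∫ t in Set.Ioo (-1 : ℝ) 1, Fc x (t + δ n * Complex.I)) atTop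
      (𝓝 (∫ t in Set.Ioo (-1 : ℝ) 1, Fc x t)) := by
    refine tendsto_integral_of_dominated_convergence (fun t => ‖Fc x t‖) ?_
      (Fc_integrable x).norm ?_ ?_
    · intro n
      refine ContinuousOn.aestronglyMeasurable (fun t ht => ?_) measurableSet_Ioo
      obtain ⟨h1, h2⟩ := slit_of_im (w := (t : ℂ) + δ n * Complex.I) (by simpa using hδ0 n)
      have := (Fc_diff x h1 h2).continuousAt
      refine ContinuousAt.continuousWithinAt ?_
      exact ContinuousAt.comp (f := fun t : ℝ => (t : ℂ) + δ n * Complex.I) this (by fun_prop)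
    · intro n
      filter_upwards [ae_restrict_mem measurableSet_Ioo] with t ht
      obtain ⟨ht1, ht2⟩ := ht
      rw [norm_Fc, norm_Fc]
      have a1 : ‖1 - (t : ℂ)‖ ≤ ‖1 - ((t : ℂ) + δ n * Complex.I)‖ := by
        rw [show (1 - (t : ℂ)) = ((1 - t : ℝ) : ℂ) by push_cast; rfl, Complex.norm_real]
        have := Complex.abs_re_le_norm (1 - ((t : ℂ) + δ n * Complex.I))
        simpa using this
      have a2 : ‖1 + (t : ℂ)‖ ≤ ‖1 + ((t : ℂ) + δ n * Complex.I)‖ := by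
        rw [show (1 + (t : ℂ)) = ((1 + t : ℝ) : ℂ) by push_cast; rfl, Complex.norm_real]
        have := Complex.abs_re_le_norm (1 + ((t : ℂ) + δ n * Complex.I))
        simpa using this
      have b1 : 0 < ‖1 - (t : ℂ)‖ := norm_pos_iff.2 (Complex.slitPlane_ne_zero
        (slit_of_re ⟨ht1, ht2⟩).1)
      have b2 : 0 < ‖1 + (t : ℂ)‖ := norm_pos_iff.2 (Complex.slitPlane_ne_zero
        (slit_of_re ⟨ht1, ht2⟩).2)
      have c1 := Real.rpow_le_rpow_of_nonpos b1 a1 (show (-1 / 2 : ℝ) ≤ 0 by norm_num)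
      have c2 := Real.rpow_le_rpow_of_nonpos b2 a2 (show (-1 / 2 : ℝ) ≤ 0 by norm_num)
      have c3 : rexp (-(x * ((t : ℂ) + δ n * Complex.I).im)) ≤ rexp (-(x * (t : ℂ).im)) := by
        apply Real.exp_le_exp.2
        have := mul_pos hx (hδ0 n)
        simp
        linarith
      gcongr
    · filter_upwards [ae_restrict_mem measurableSet_Ioo] with t ht
      obtain ⟨h1, h2⟩ := slit_of_re ht
      have hc := (Fc_diff x h1 h2).continuousAt
      refine hc.tendsto.comp ?_
      have : Tendsto (fun n => (t : ℂ) + (δ n : ℂ) * Complex.I) atTop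
          (𝓝 ((t : ℂ) + ((0 : ℝ) : ℂ) * Complex.I)) :=
        tendsto_const_nhds.add (((Complex.continuous_ofReal.tendsto 0).comp hδt).mul_const _)
      simpa using this
  -- top
  have hT : Tendsto (fun n => ∫ t in (-1 : ℝ)..1, Fc x (t + R n * Complex.I)) atTop (𝓝 0) := by
    have hb : ∀ n, ‖∫ t in (-1 : ℝ)..1, Fc x (t + R n * Complex.I)‖ ≤ rexp (-(x * R n)) * 2 := by
      intro n
      have := intervalIntegral.norm_integral_le_of_norm_le_const (a := -1) (b := 1)
        (C := rexp (-(x * R n))) (f := fun t : ℝ => Fc x (t + R n * Complex.I)) ?_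
      · refine this.trans (le_of_eq ?_)
        norm_num
      · intro t _
        rw [norm_Fc]
        have a1 : 1 ≤ ‖1 - ((t : ℂ) + R n * Complex.I)‖ := by
          have := Complex.abs_im_le_norm (1 - ((t : ℂ) + R n * Complex.I))
          simp at this
          exact (hR1 n).trans ((le_abs_self _).trans this)
        have a2 : 1 ≤ ‖1 + ((t : ℂ) + R n * Complex.I)‖ := by
          have := Complex.abs_im_le_norm (1 + ((t : ℂ) + R n * Complex.I))
          simp at this
          exact (hR1 n).trans ((le_abs_self _).trans this)
        have c1 := Real.rpow_le_one_of_one_le_of_nonpos a1 (show (-1 / 2 : ℝ) ≤ 0 by norm_num)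
        have c2 := Real.rpow_le_one_of_one_le_of_nonpos a2 (show (-1 / 2 : ℝ) ≤ 0 by norm_num)
        have c3 := mul_le_one₀ c1 (by positivity) c2
        have : ((t : ℂ) + R n * Complex.I).im = R n := by simp
        rw [this]
        calc _ ≤ rexp (-(x * R n)) * 1 := by gcongr
          _ = _ := mul_one _
    refine squeeze_zero_norm hb ?_
    have h1 : Tendsto (fun n => x * R n) atTop atTop := hRt.const_mul_atTop hx
    have := (Real.tendsto_exp_neg_atTop_nhds_zero.comp h1).mul_const 2
    simpa using this
  have hV : Tendsto (fun n => ∫ y in Set.Ioc (δ n) (R n), Fc x ((1 : ℝ) + y * Complex.I)) atTop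
      (𝓝 (∫ y in Set.Ioi (0 : ℝ), Fc x ((1 : ℝ) + y * Complex.I))) := by
    have hcov : AECover (volume.restrict (Set.Ioi (0 : ℝ))) atTop
        (fun n => Set.Ioc (δ n) (R n)) :=
      (aecover_Ioi_of_Ioi hδt).inter (aecover_Iic hRt)
    have := hcov.integral_tendsto_of_countably_generated (right_int' hx)
    refine this.congr fun n => ?_
    rw [Measure.restrict_restrict measurableSet_Ioc, Set.inter_eq_left.2]
    intro y hy
    exact (hδ0 n).trans hy.1
  have hlim := hB.sub hT
  rw [sub_zero] at hlim
  have hlim2 := (Complex.continuous_re.tendsto _).comp hlim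
  have hlim3 := ((Complex.continuous_im.tendsto _).comp hV).const_mul 2
  rw [Fc_integral_re] at hlim2
  refine tendsto_nhds_unique hlim2 (hlim3.congr fun n => ?_)
  simp only [Function.comp]
  rw [rect_id x (hδ0 n) (hδR n), Complex.ofReal_re]

lemma sin_bound : ∃ C : ℝ, 0 < C ∧ ∀ x : ℝ, 0 < x → J0 x = 0 → |sin (x + π / 4)| ≤ C / x := by
  set G := Real.Gamma (1 / 2) with hG
  set H := Real.Gamma (3 / 2) with hH
  have hGp : 0 < G := Real.Gamma_pos_of_pos (by norm_num)
  have hHp : 0 < H := Real.Gamma_pos_of_pos (by norm_num)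
  set s : ℝ := (2 : ℝ) ^ (-1 / 2 : ℝ) with hs
  have hsp : 0 < s := by positivity
  refine ⟨H / (s * G), by positivity, fun x hx h0 => ?_⟩
  have hc := contour hx
  rw [h0, mul_zero] at hc
  have him : (∫ y in Set.Ioi (0 : ℝ), Fc x ((1 : ℝ) + y * Complex.I)).im = 0 := by linarith
  set e := Complex.exp ((x + π / 4 : ℝ) * Complex.I) with he
  have h1 : (∫ y in Set.Ioi (0 : ℝ), Fc x ((1 : ℝ) + y * Complex.I)) =
      e * ∫ y in Set.Ioi (0 : ℝ), (ker x y : ℂ) * ((2 : ℂ) + y * Complex.I) ^ (((-1 / 2 : ℝ)) : ℂ) := by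
    rw [← integral_const_mul]
    exact setIntegral_congr_fun measurableSet_Ioi fun y hy => Fc_right x hy
  have h2c : (2 : ℂ) ^ (((-1 / 2 : ℝ)) : ℂ) = (s : ℂ) := by
    rw [hs, Complex.ofReal_cpow (by norm_num)]; norm_num
  set I1 := ∫ y in Set.Ioi (0 : ℝ), (ker x y : ℂ) *
    ((2 : ℂ) + y * Complex.I) ^ (((-1 / 2 : ℝ)) : ℂ) with hI1
  set K := ∫ y in Set.Ioi (0 : ℝ), ker x y with hK
  have h3 : ‖I1 - ((K * s : ℝ) : ℂ)‖ ≤ ∫ y in Set.Ioi (0 : ℝ), y * ker x y := by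
    have e1 : ((K * s : ℝ) : ℂ) = ∫ y in Set.Ioi (0 : ℝ), (ker x y : ℂ) * (s : ℂ) := by
      rw [integral_mul_const, integral_complex_ofReal]
      push_cast; rfl
    have e2 : IntegrableOn (fun y : ℝ => (ker x y : ℂ) * (s : ℂ)) (Set.Ioi 0) :=
      (ker_int hx).ofReal.mul_const _
    rw [e1, hI1, ← integral_sub (right_int hx) e2]
    refine norm_integral_le_of_norm_le (ker_mul_int hx) ?_
    filter_upwards [ae_restrict_mem measurableSet_Ioi] with y hy
    have hy : 0 < y := hy
    rw [← mul_sub, norm_mul, ← h2c, Complex.norm_real]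
    have hk : 0 ≤ ker x y := by rw [ker]; positivity
    rw [Real.norm_of_nonneg hk, mul_comm]
    exact mul_le_mul_of_nonneg_right (cpow_diff hy) hk
  have h4 : ‖e‖ = 1 := by rw [he, Complex.norm_exp_ofReal_mul_I]
  have h5 : e.im = sin (x + π / 4) := by rw [he, Complex.exp_ofReal_mul_I_im]
  have h6 : (e * I1).im - sin (x + π / 4) * (K * s) = (e * (I1 - ((K * s : ℝ) : ℂ))).im := by
    rw [mul_sub, Complex.sub_im, Complex.im_mul_ofReal, h5]
  rw [← h1, him] at h6
  have h7 : |sin (x + π / 4) * (K * s)| ≤ ∫ y in Set.Ioi (0 : ℝ), y * ker x y := by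
    calc _ = |(e * (I1 - ((K * s : ℝ) : ℂ))).im| := by rw [← h6, zero_sub, abs_neg]
      _ ≤ _ := Complex.abs_im_le_norm _
      _ ≤ _ := by rw [norm_mul, h4, one_mul]; exact h3
  rw [ker_mul_integral hx, hK, ker_integral hx, abs_mul,
    abs_of_pos (a := (1 / x) ^ (1 / 2 : ℝ) * Real.Gamma (1 / 2) * s) (by positivity),
    show (3 / 2 : ℝ) = 1 + 1 / 2 by norm_num, Real.rpow_add (by positivity), rpow_one,
    show (1 + 1 / 2 : ℝ) = 3 / 2 by norm_num, ← hG, ← hH] at h7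
  set q := (1 / x) ^ (1 / 2 : ℝ) with hq
  have hqp : 0 < q := by positivity
  have h8 : (|sin (x + π / 4)| * (s * G)) * q ≤ (1 / x * H) * q := by
    calc _ = |sin (x + π / 4)| * (q * G * s) := by ring
      _ ≤ _ := h7
      _ = _ := by ring
  have h9 := le_of_mul_le_mul_right h8 hqp
  rw [div_div, le_div_iff₀ (by positivity)]
  calc |sin (x + π / 4)| * (s * G * x) = (|sin (x + π / 4)| * (s * G)) * x := by ring
    _ ≤ (1 / x * H) * x := by gcongr
    _ = H := by field_simp

/-- zeros are close to quarter-integers multiples of `π` -/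
lemma zero_approx : ∃ C : ℝ, 0 < C ∧ ∀ x : ℝ, 0 < x → J0 x = 0 →
    ∃ m : ℤ, |x - π / 4 * m| ≤ π / 2 ∧ |x ^ 2 - π ^ 2 / 16 * (m : ℝ) ^ 2| ≤ C := by
  obtain ⟨C, hC, h⟩ := sin_bound
  refine ⟨π * C + (π / 2) ^ 2, by positivity, fun x hx h0 => ?_⟩
  set k : ℤ := round ((x + π / 4) / π) with hk
  set d : ℝ := x + π / 4 - k * π with hd
  have hd1 : |d| ≤ π / 2 := by
    have := abs_sub_round ((x + π / 4) / π)
    have e : d = ((x + π / 4) / π - round ((x + π / 4) / π)) * π := by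
      rw [hd, hk]; field_simp
    rw [e, abs_mul, abs_of_pos pi_pos]
    nlinarith [pi_pos]
  have hs : |sin d| = |sin (x + π / 4)| := by
    rw [hd, sin_sub_int_mul_pi, abs_mul]
    simp
  have hd2 := Real.mul_abs_le_abs_sin hd1
  rw [hs] at hd2
  have hd3 := hd2.trans (h x hx h0)
  have hd4 : |d| * x ≤ π / 2 * C := by
    rw [le_div_iff₀ hx] at hd3
    have : π / 2 * (2 / π * |d| * x) ≤ π / 2 * C := by gcongr
    calc |d| * x = π / 2 * (2 / π * |d| * x) := by field_simp
      _ ≤ _ := this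
  refine ⟨4 * k - 1, ?_, ?_⟩
  · convert hd1 using 2
    rw [hd]; push_cast; ring
  · have e : x ^ 2 - π ^ 2 / 16 * (((4 * k - 1 : ℤ)) : ℝ) ^ 2 = 2 * (d * x) - d ^ 2 := by
      rw [hd]; push_cast; ring
    rw [e]
    calc |2 * (d * x) - d ^ 2| ≤ |2 * (d * x)| + |d ^ 2| := abs_sub _ _
      _ = 2 * (|d| * x) + |d| ^ 2 := by
        rw [abs_mul, abs_mul, abs_of_pos hx, abs_pow]; norm_num
      _ ≤ 2 * (π / 2 * C) + (π / 2) ^ 2 := by gcongr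
      _ = _ := by ring

end BesselAux

namespace BesselAux

/-- Gaussian integers of norm `n` -/
def reps (n : ℕ) : Set GaussianInt := {x | x.norm = n}

lemma gnorm (x : GaussianInt) : x.norm = x.re ^ 2 + x.im ^ 2 := by
  rw [Zsqrtd.norm_def]; ring

lemma reps_finite (n : ℕ) : (reps n).Finite := by
  have h : ((Set.Icc (-(n : ℤ)) n) ×ˢ (Set.Icc (-(n : ℤ)) n)).Finite :=
    (Set.finite_Icc _ _).prod (Set.finite_Icc _ _)
  refine Set.Finite.subset (h.image (fun p : ℤ × ℤ => (⟨p.1, p.2⟩ : GaussianInt))) ?_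
  intro x hx
  have hx : x.norm = n := hx
  rw [gnorm] at hx
  refine ⟨(x.re, x.im), ⟨⟨?_, ?_⟩, ⟨?_, ?_⟩⟩, rfl⟩ <;>
    nlinarith [sq_nonneg x.re, sq_nonneg x.im, sq_nonneg (x.re - 1), sq_nonneg (x.re + 1),
      sq_nonneg (x.im - 1), sq_nonneg (x.im + 1), Int.le_self_sq x.re, Int.le_self_sq x.im,
      Int.le_self_sq (-x.re), Int.le_self_sq (-x.im)]

lemma dvd_of_norm {x : GaussianInt} {n : ℕ} (h : x.norm = n) : x ∣ (n : GaussianInt) := by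
  refine ⟨star x, ?_⟩
  rw [← Zsqrtd.norm_eq_mul_conj, h]
  simp

lemma norm_dvd_sq {y : GaussianInt} {a : ℕ} (h : y ∣ (a : GaussianInt)) :
    y.norm.natAbs ∣ a ^ 2 := by
  obtain ⟨c, hc⟩ := h
  have h1 := congrArg Zsqrtd.norm hc
  rw [Zsqrtd.norm_mul, Zsqrtd.norm_natCast] at h1
  have h2 := congrArg Int.natAbs h1
  rw [Int.natAbs_mul, Int.natAbs_mul, Int.natAbs_natCast] at h2
  exact ⟨c.norm.natAbs, by rw [← h2]; ring⟩

lemma gnorm_natAbs (y : GaussianInt) : (y.norm.natAbs : ℤ) = y.norm :=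
  Int.natAbs_of_nonneg (by rw [gnorm]; positivity)

lemma reps_mul {a b : ℕ} (hab : a.Coprime b) :
    reps (a * b) ⊆ (fun p : GaussianInt × GaussianInt => p.1 * p.2) '' (reps a ×ˢ reps b) := by
  intro x hx
  have hx : x.norm = (a * b : ℕ) := hx
  have hd := dvd_of_norm hx
  rw [Nat.cast_mul] at hd
  obtain ⟨y, w, hy, hw, rfl⟩ := exists_dvd_and_dvd_of_dvd_mul hd
  have hy2 := norm_dvd_sq hy
  have hw2 := norm_dvd_sq hw
  have hN : y.norm.natAbs * w.norm.natAbs = a * b := by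
    rw [Zsqrtd.norm_mul] at hx
    rw [← Int.natAbs_mul, hx, Int.natAbs_natCast]
  have c1 : y.norm.natAbs.Coprime b := Nat.Coprime.coprime_dvd_left hy2 (hab.pow_left 2)
  have c2 : w.norm.natAbs.Coprime a := Nat.Coprime.coprime_dvd_left hw2 (hab.symm.pow_left 2)
  have d1 : y.norm.natAbs ∣ a := c1.dvd_of_dvd_mul_right ⟨_, hN.symm⟩
  have d2 : w.norm.natAbs ∣ b := c2.dvd_of_dvd_mul_left ⟨y.norm.natAbs, by rw [← hN]; ring⟩
  have d3 : a ∣ y.norm.natAbs := by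
    have : a ∣ y.norm.natAbs * w.norm.natAbs := ⟨b, hN⟩
    exact c2.symm.dvd_of_dvd_mul_right this
  have d4 : b ∣ w.norm.natAbs := by
    have : b ∣ y.norm.natAbs * w.norm.natAbs := ⟨a, by rw [hN]; ring⟩
    exact c1.symm.dvd_of_dvd_mul_left this
  have e1 := Nat.dvd_antisymm d1 d3
  have e2 := Nat.dvd_antisymm d2 d4
  refine ⟨(y, w), ⟨?_, ?_⟩, rfl⟩
  · show y.norm = a
    rw [← gnorm_natAbs, e1]
  · show w.norm = b
    rw [← gnorm_natAbs, e2]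

lemma ncard_mul_le {a b : ℕ} (hab : a.Coprime b) :
    (reps (a * b)).ncard ≤ (reps a).ncard * (reps b).ncard := by
  refine (Set.ncard_le_ncard (reps_mul hab)
    (((reps_finite a).prod (reps_finite b)).image _)).trans ?_
  refine (Set.ncard_image_le ((reps_finite a).prod (reps_finite b))).trans ?_
  rw [Set.ncard_prod]

lemma isUnit_of_natAbs {x : GaussianInt} (h : x.norm.natAbs = 1) : IsUnit x :=
  Zsqrtd.norm_eq_one_iff.1 h

lemma prime_of_norm {p : ℕ} (hp : p.Prime) {x : GaussianInt} (h : x.norm.natAbs = p) :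
    Prime x := by
  rw [← irreducible_iff_prime]
  refine ⟨fun hu => ?_, fun {a b} hab => ?_⟩
  · rw [← Zsqrtd.norm_eq_one_iff, h] at hu
    exact hp.one_lt.ne' hu
  · have : a.norm.natAbs * b.norm.natAbs = p := by
      rw [← h, hab, Zsqrtd.norm_mul, Int.natAbs_mul]
    rcases Nat.prime_mul_iff.1 (this ▸ hp) with ⟨_, h1⟩ | ⟨_, h1⟩
    · exact Or.inr (isUnit_of_natAbs h1)
    · exact Or.inl (isUnit_of_natAbs h1)

lemma split_prime {p : ℕ} (hp : p.Prime) : ∃ q r : GaussianInt, (p : GaussianInt) = q * r ∧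
    (Prime q ∨ q = 1) ∧ (Prime r ∨ r = 1) := by
  by_cases h : Irreducible (p : GaussianInt)
  · exact ⟨p, 1, by simp, Or.inl (irreducible_iff_prime.1 h), Or.inr rfl⟩
  · have hnu : ¬ IsUnit (p : GaussianInt) := by
      rw [← Zsqrtd.norm_eq_one_iff, Zsqrtd.norm_natCast, Int.natAbs_mul, Int.natAbs_natCast]
      intro h1
      have := Nat.eq_one_of_mul_eq_one_left h1
      exact hp.one_lt.ne' this
    rw [irreducible_iff] at h
    push Not at h
    obtain ⟨q, r, hqr, hq, hr⟩ := h hnu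
    have hN : q.norm.natAbs * r.norm.natAbs = p * p := by
      rw [← Int.natAbs_mul, ← Zsqrtd.norm_mul, ← hqr, Zsqrtd.norm_natCast, Int.natAbs_mul,
        Int.natAbs_natCast]
    have hq1 : q.norm.natAbs ≠ 1 := fun h => hq (isUnit_of_natAbs h)
    have hr1 : r.norm.natAbs ≠ 1 := fun h => hr (isUnit_of_natAbs h)
    have := (hp.mul_eq_prime_sq_iff hq1 hr1).1 (by rw [hN, sq])
    exact ⟨q, r, hqr, Or.inl (prime_of_norm hp this.1), Or.inl (prime_of_norm hp this.2)⟩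

lemma assoc_of_dvd {q y : GaussianInt} (hq : Prime q ∨ q = 1) {e : ℕ} (h : y ∣ q ^ e) :
    ∃ i ≤ e, Associated y (q ^ i) := by
  rcases hq with hq | rfl
  · exact (dvd_prime_pow hq e).1 h
  · refine ⟨0, Nat.zero_le _, ?_⟩
    rw [one_pow] at h
    rw [pow_zero]
    exact associated_one_iff_isUnit.2 (isUnit_of_dvd_one h)

lemma reps_prime_pow {p : ℕ} (hp : p.Prime) (e : ℕ) :
    (reps (p ^ e)).ncard ≤ (reps 1).ncard * (e + 1) ^ 2 := by
  obtain ⟨q, r, hqr, hq, hr⟩ := split_prime hp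
  have hsub : reps (p ^ e) ⊆ (fun t : GaussianInt × ℕ × ℕ => q ^ t.2.1 * r ^ t.2.2 * t.1) ''
      (reps 1 ×ˢ ((Finset.range (e + 1) : Set ℕ) ×ˢ (Finset.range (e + 1) : Set ℕ))) := by
    intro x hx
    have hd := dvd_of_norm hx
    rw [Nat.cast_pow, hqr, mul_pow] at hd
    obtain ⟨y, w, hy, hw, rfl⟩ := exists_dvd_and_dvd_of_dvd_mul hd
    obtain ⟨i, hi, hi2⟩ := assoc_of_dvd hq hy
    obtain ⟨j, hj, hj2⟩ := assoc_of_dvd hr hw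
    obtain ⟨u, hu⟩ := (hi2.mul_mul hj2).symm
    refine ⟨(u, i, j), ⟨?_, ?_, ?_⟩, hu⟩
    · show (u : GaussianInt).norm = (1 : ℕ)
      rw [← gnorm_natAbs, Zsqrtd.norm_eq_one_iff.2 u.isUnit]
    · simp only [Finset.coe_range, Set.mem_Iio]; omega
    · simp only [Finset.coe_range, Set.mem_Iio]; omega
  have hfin : (reps 1 ×ˢ ((Finset.range (e + 1) : Set ℕ) ×ˢ (Finset.range (e + 1) : Set ℕ))).Finite :=
    (reps_finite 1).prod ((Finset.finite_toSet _).prod (Finset.finite_toSet _))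
  refine (Set.ncard_le_ncard hsub (hfin.image _)).trans ?_
  refine (Set.ncard_image_le hfin).trans ?_
  rw [Set.ncard_prod, Set.ncard_prod, Set.ncard_coe_finset, Finset.card_range, sq]

lemma reps_bound (ε : ℝ) (hε : 0 < ε) : ∃ C : ℝ, 1 ≤ C ∧ ∀ n : ℕ, 1 ≤ n →
    ((reps n).ncard : ℝ) ≤ C * (n : ℝ) ^ ε := by
  have hK0 : 1 ≤ (reps 1).ncard := by
    exact (Set.ncard_pos (reps_finite 1)).2 ⟨1, by show Zsqrtd.norm _ = _; simp⟩
  set K0 : ℝ := ((reps 1).ncard : ℝ) with hK0def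
  have hK0' : 1 ≤ K0 := by rw [hK0def]; exact_mod_cast hK0
  set α : ℝ := ε * Real.log 2 / 2 with hα
  have hαp : 0 < α := by have := Real.log_pos (show (1 : ℝ) < 2 by norm_num); positivity
  set M : ℝ := max 1 (1 / α) with hM
  have hM1 : 1 ≤ M := le_max_left _ _
  have hMα : 1 ≤ M * α := by
    have : 1 / α * α ≤ M * α := by gcongr; exact le_max_right _ _
    rwa [one_div, inv_mul_cancel₀ hαp.ne'] at this
  set K : ℝ := K0 * M ^ 2 with hK
  have hK1 : 1 ≤ K := by rw [hK]; exact one_le_mul_of_one_le_of_one_le hK0' (one_le_pow₀ hM1)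
  obtain ⟨P, hP⟩ := exists_nat_ge ((4 * K0) ^ (1 / ε))
  set c : ℕ → ℝ := fun p => if p < P then K else 1 with hc
  have hc1 : ∀ p, 1 ≤ c p := fun p => by simp only [hc]; split_ifs <;> linarith
  have hpp : ∀ p e : ℕ, p.Prime → 0 < e →
      K0 * ((e : ℝ) + 1) ^ 2 ≤ c p * ((p : ℝ) ^ e) ^ ε := by
    intro p e hp he
    have hp2 : (2 : ℝ) ≤ p := by exact_mod_cast hp.two_le
    rw [← Real.rpow_natCast (p : ℝ) e, ← Real.rpow_mul (by positivity)]
    by_cases hpP : p < P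
    · simp only [hc, hpP, if_true]
      have h1 : (e : ℝ) + 1 ≤ M * Real.exp (α * e) := by
        have h2 := Real.add_one_le_exp (α * e)
        have he0 : (0 : ℝ) ≤ e := Nat.cast_nonneg e
        calc (e : ℝ) + 1 ≤ M * α * e + M := by nlinarith
          _ = M * (α * e + 1) := by ring
          _ ≤ _ := by gcongr
      have h3 : Real.exp (α * e) ^ 2 ≤ (p : ℝ) ^ ((e : ℝ) * ε) := by
        rw [← Real.exp_nat_mul, Real.rpow_def_of_pos (by positivity)]
        apply Real.exp_le_exp.2
        have : Real.log 2 ≤ Real.log p := Real.log_le_log (by norm_num) hp2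
        calc ((2 : ℕ) : ℝ) * (α * e) = Real.log 2 * (e * ε) := by rw [hα]; push_cast; ring
          _ ≤ _ := by gcongr
      calc K0 * ((e : ℝ) + 1) ^ 2 ≤ K0 * (M * Real.exp (α * e)) ^ 2 := by gcongr
        _ = K * Real.exp (α * e) ^ 2 := by rw [hK]; ring
        _ ≤ _ := by gcongr
    · simp only [hc, hpP, if_false, one_mul]
      have hp3 : (4 * K0) ^ (1 / ε) ≤ p := hP.trans (by exact_mod_cast not_lt.1 hpP)
      have h4 : 4 * K0 ≤ (p : ℝ) ^ ε := by
        have := Real.rpow_le_rpow (by positivity) hp3 hε.le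
        rwa [← Real.rpow_mul (by positivity), one_div, inv_mul_cancel₀ hε.ne', Real.rpow_one] at this
      have h5 : (e : ℝ) + 1 ≤ 2 ^ e := by
        have := Nat.lt_two_pow_self (n := e)
        exact_mod_cast this
      have h6 : K0 ≤ K0 ^ e := le_self_pow₀ hK0' he.ne'
      rw [mul_comm (e : ℝ), Real.rpow_mul (by positivity), Real.rpow_natCast]
      calc K0 * ((e : ℝ) + 1) ^ 2 ≤ K0 ^ e * (2 ^ e) ^ 2 := by gcongr
        _ = (4 * K0) ^ e := by rw [← pow_mul, mul_comm e 2, pow_mul, mul_pow]; norm_num; ring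
        _ ≤ _ := by gcongr
  have main : ∀ n : ℕ, 1 ≤ n → ((reps n).ncard : ℝ) ≤ (K0 * ∏ p ∈ n.primeFactors, c p) * (n : ℝ) ^ ε
      ∧ (n ≠ 1 → ((reps n).ncard : ℝ) ≤ (∏ p ∈ n.primeFactors, c p) * (n : ℝ) ^ ε) := by
    intro n
    induction n using Nat.recOnPosPrimePosCoprime with
    | zero => intro h; omega
    | one => intro _; simp [hK0def]
    | prime_pow p e hp he =>
      intro _
      have h1 : ((reps (p ^ e)).ncard : ℝ) ≤ K0 * ((e : ℝ) + 1) ^ 2 := by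
        have := reps_prime_pow hp e
        rw [hK0def]; exact_mod_cast this
      have h2 : ((reps (p ^ e)).ncard : ℝ) ≤
          (∏ q ∈ (p ^ e).primeFactors, c q) * ((p ^ e : ℕ) : ℝ) ^ ε := by
        rw [Nat.primeFactors_prime_pow he.ne' hp, Finset.prod_singleton]
        push_cast
        exact h1.trans (hpp p e hp he)
      refine ⟨h2.trans ?_, fun _ => h2⟩
      have h3 : 0 ≤ ∏ q ∈ (p ^ e).primeFactors, c q :=
        Finset.prod_nonneg fun q _ => zero_le_one.trans (hc1 q)
      gcongr
      nlinarith
    | coprime a b ha hb hab iha ihb =>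
      intro _
      have h1 := (iha (by omega)).2 (by omega)
      have h2 := (ihb (by omega)).2 (by omega)
      have hA : 0 ≤ ∏ q ∈ a.primeFactors, c q :=
        Finset.prod_nonneg fun q _ => zero_le_one.trans (hc1 q)
      have hB : 0 ≤ ∏ q ∈ b.primeFactors, c q :=
        Finset.prod_nonneg fun q _ => zero_le_one.trans (hc1 q)
      have h3 : ((reps (a * b)).ncard : ℝ) ≤
          (∏ q ∈ (a * b).primeFactors, c q) * ((a * b : ℕ) : ℝ) ^ ε := by
        have := ncard_mul_le hab
        have h4 : ((reps (a * b)).ncard : ℝ) ≤ (reps a).ncard * (reps b).ncard := by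
          exact_mod_cast this
        rw [hab.primeFactors_mul, Finset.prod_union hab.disjoint_primeFactors]
        push_cast
        rw [Real.mul_rpow (by positivity) (by positivity)]
        calc _ ≤ _ := h4
          _ ≤ ((∏ q ∈ a.primeFactors, c q) * (a : ℝ) ^ ε) *
              ((∏ q ∈ b.primeFactors, c q) * (b : ℝ) ^ ε) := by gcongr
          _ = _ := by ring
      refine ⟨h3.trans ?_, fun _ => h3⟩
      have h5 : 0 ≤ ∏ q ∈ (a * b).primeFactors, c q :=
        Finset.prod_nonneg fun q _ => zero_le_one.trans (hc1 q)
      gcongr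
      nlinarith
  refine ⟨K0 * K ^ P, one_le_mul_of_one_le_of_one_le hK0' (one_le_pow₀ hK1), fun n hn => ?_⟩
  refine (main n hn).1.trans ?_
  gcongr
  calc ∏ p ∈ n.primeFactors, c p
      = (∏ p ∈ n.primeFactors with p < P, K) * ∏ p ∈ n.primeFactors with ¬ p < P, (1 : ℝ) := by
        rw [← Finset.prod_ite]
    _ = K ^ (Finset.card (n.primeFactors.filter (· < P))) := by simp
    _ ≤ K ^ P := by
      apply pow_le_pow_right₀ hK1
      calc _ ≤ (Finset.range P).card := Finset.card_le_card (fun p hp => by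
            simp only [Finset.mem_filter] at hp; exact Finset.mem_range.2 hp.2)
        _ = P := Finset.card_range P

end BesselAux

namespace BesselAux

open Finset

lemma card_spacing (T : Finset ℕ) (D : ℝ) (hD : 0 ≤ D)
    (h : ∀ m ∈ T, ∀ n ∈ T, m ≤ n → (n : ℝ) - m ≤ D) : (#T : ℝ) ≤ 1 + D := by
  rcases T.eq_empty_or_nonempty with rfl | hT
  · simp; linarith
  · have h1 := h _ (T.min'_mem hT) _ (T.max'_mem hT) (T.min'_le _ (T.max'_mem hT))
    have h2 : T ⊆ Finset.Icc (T.min' hT) (T.max' hT) := fun x hx =>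
      Finset.mem_Icc.2 ⟨T.min'_le _ hx, T.le_max' _ hx⟩
    have h3 := Finset.card_le_card h2
    rw [Nat.card_Icc] at h3
    have h4 : T.min' hT ≤ T.max' hT := T.min'_le _ (T.max'_mem hT)
    have h5 : #T + T.min' hT ≤ T.max' hT + 1 := by omega
    have h6 : (#T : ℝ) + (T.min' hT : ℕ) ≤ (T.max' hT : ℕ) + 1 := by exact_mod_cast h5
    linarith

lemma card_fibers {α β : Type*} [DecidableEq β] (s : Finset α) (f : α → β) (B : ℝ)
    (h : ∀ b ∈ s.image f, (#{x ∈ s | f x = b} : ℝ) ≤ B) : (#s : ℝ) ≤ B * #(s.image f) := by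
  rw [Finset.card_eq_sum_card_image f s]
  push_cast
  calc _ ≤ ∑ b ∈ s.image f, B := Finset.sum_le_sum h
    _ = _ := by rw [Finset.sum_const, nsmul_eq_mul, mul_comm]

/-- Separation hypotheses on the sequence. -/
structure Sep (z : ℕ → ℝ) (c κ : ℝ) : Prop where
  c_pos : 0 < c
  k_pos : 0 < κ
  pos : ∀ n, 1 ≤ n → 0 < z n
  gap : ∀ m n : ℕ, 1 ≤ m → m ≤ n → c * ((n : ℝ) - m) ≤ z n - z m
  low : ∀ n, 1 ≤ n → κ * (1 + z n) ≤ z n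

lemma Sep.card_interval {z : ℕ → ℝ} {c κ : ℝ} (H : Sep z c κ) (T : Finset ℕ) (a ℓ : ℝ) (hl : 0 ≤ ℓ)
    (h : ∀ n ∈ T, 1 ≤ n ∧ a ≤ z n ∧ z n ≤ a + ℓ) : (#T : ℝ) ≤ 1 + ℓ / c := by
  have hc := H.c_pos
  refine card_spacing T _ (by positivity) fun m hm n hn hmn => ?_
  have := H.gap m n (h m hm).1 hmn
  rw [le_div_iff₀ hc]
  linarith [(h m hm).2.1, (h n hn).2.2]

lemma Sep.card_sq {z : ℕ → ℝ} {c κ : ℝ} (H : Sep z c κ) (T : Finset ℕ) (N t M : ℝ) (hN : 1 ≤ N)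
    (hM : 0 ≤ M) (h : ∀ n ∈ T, 1 ≤ n ∧ N ≤ 1 + z n ∧ |z n ^ 2 - t| ≤ M) :
    (#T : ℝ) ≤ 1 + 2 * M / (c * κ * N) := by
  have hc := H.c_pos
  have hk := H.k_pos
  refine card_spacing T _ (by positivity) fun m hm n hn hmn => ?_
  have h1 := H.gap m n (h m hm).1 hmn
  have h2 := H.low m (h m hm).1
  have h3 := H.pos n (h n hn).1
  have h4 : κ * N ≤ κ * (1 + z m) := by gcongr; exact (h m hm).2.1
  have h5 := abs_le.1 (h m hm).2.2
  have h6 := abs_le.1 (h n hn).2.2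
  have hmn' : (0 : ℝ) ≤ (n : ℝ) - m := by
    have : (m : ℝ) ≤ n := by exact_mod_cast hmn
    linarith
  rw [le_div_iff₀ (by positivity)]
  calc ((n : ℝ) - m) * (c * κ * N) = (c * ((n : ℝ) - m)) * (κ * N) := by ring
    _ ≤ (z n - z m) * (z n + z m) := by
      apply mul_le_mul h1 (by linarith) (by positivity)
      exact (by positivity : 0 ≤ c * ((n : ℝ) - m)).trans h1
    _ = z n ^ 2 - z m ^ 2 := by ring
    _ ≤ 2 * M := by linarith

/-- The pairs to be counted. -/
def Adm (z : ℕ → ℝ) (τ N₁ N₂ M : ℝ) (p : ℕ × ℕ) : Prop :=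
  1 ≤ p.1 ∧ 1 ≤ p.2 ∧ |z p.1 ^ 2 + z p.2 ^ 2 + τ| ≤ M ∧
    N₁ ≤ 1 + z p.1 ∧ 1 + z p.1 ≤ 2 * N₁ ∧ N₂ ≤ 1 + z p.2 ∧ 1 + z p.2 ≤ 2 * N₂

lemma fib_snd {z : ℕ → ℝ} {c κ : ℝ} (H : Sep z c κ) {τ N₁ N₂ M : ℝ} (hN₂ : 1 ≤ N₂) (hM : 1 ≤ M)
    (S : Finset (ℕ × ℕ)) (hS : ∀ p ∈ S, Adm z τ N₁ N₂ M p) (a : ℕ) :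
    (#{p ∈ S | p.1 = a} : ℝ) ≤ 1 + 2 * M / (c * κ * N₂) := by
  have hinj : Set.InjOn Prod.snd (({p ∈ S | p.1 = a} : Finset (ℕ × ℕ)) : Set (ℕ × ℕ)) := by
    intro p hp q hq hpq
    simp only [Finset.coe_filter, Set.mem_setOf_eq] at hp hq
    exact Prod.ext (hp.2.trans hq.2.symm) hpq
  rw [← Finset.card_image_of_injOn hinj]
  refine H.card_sq _ N₂ (-τ - z a ^ 2) M hN₂ (by linarith) fun n hn => ?_
  simp only [Finset.mem_image, Finset.mem_filter] at hn
  obtain ⟨p, ⟨hp, rfl⟩, rfl⟩ := hn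
  obtain ⟨h1, h2, h3, h4, h5, h6, h7⟩ := hS p hp
  refine ⟨h2, h6, ?_⟩
  convert h3 using 2
  ring

lemma fib_fst {z : ℕ → ℝ} {c κ : ℝ} (H : Sep z c κ) {τ N₁ N₂ M : ℝ} (hN₁ : 1 ≤ N₁) (hM : 1 ≤ M)
    (S : Finset (ℕ × ℕ)) (hS : ∀ p ∈ S, Adm z τ N₁ N₂ M p) (b : ℕ) :
    (#{p ∈ S | p.2 = b} : ℝ) ≤ 1 + 2 * M / (c * κ * N₁) := by
  have hinj : Set.InjOn Prod.fst (({p ∈ S | p.2 = b} : Finset (ℕ × ℕ)) : Set (ℕ × ℕ)) := by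
    intro p hp q hq hpq
    simp only [Finset.coe_filter, Set.mem_setOf_eq] at hp hq
    exact Prod.ext hpq (hp.2.trans hq.2.symm)
  rw [← Finset.card_image_of_injOn hinj]
  refine H.card_sq _ N₁ (-τ - z b ^ 2) M hN₁ (by linarith) fun n hn => ?_
  simp only [Finset.mem_image, Finset.mem_filter] at hn
  obtain ⟨p, ⟨hp, rfl⟩, rfl⟩ := hn
  obtain ⟨h1, h2, h3, h4, h5, h6, h7⟩ := hS p hp
  refine ⟨h1, h4, ?_⟩
  convert h3 using 2
  ring

lemma case1 {z : ℕ → ℝ} {c κ : ℝ} (H : Sep z c κ) {τ N₁ N₂ M : ℝ} (hN₁ : 1 ≤ N₁) (hN : N₁ ≤ N₂)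
    (hM : N₁ ≤ M) (S : Finset (ℕ × ℕ)) (hS : ∀ p ∈ S, Adm z τ N₁ N₂ M p) :
    (#S : ℝ) ≤ (1 + 1 / c) * (1 + 2 / (c * κ)) * M := by
  have hc := H.c_pos
  have hk := H.k_pos
  have h1 := card_fibers S Prod.fst _
    (fun b _ => fib_snd H (hN₁.trans hN) (hN₁.trans hM) S hS b)
  have h2 : (#(S.image Prod.fst) : ℝ) ≤ 1 + N₁ / c := by
    refine H.card_interval _ (N₁ - 1) N₁ (by linarith) fun n hn => ?_
    simp only [Finset.mem_image] at hn
    obtain ⟨p, hp, rfl⟩ := hn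
    obtain ⟨h1, h2, h3, h4, h5, h6, h7⟩ := hS p hp
    exact ⟨h1, by linarith, by linarith⟩
  have hM0 : 0 ≤ M := by linarith
  have hN20 : 0 < N₂ := by linarith
  have h3 : 1 + N₁ / c ≤ N₁ * (1 + 1 / c) := by
    have : N₁ / c = N₁ * (1 / c) := by ring
    rw [this]; linarith
  have h5 : N₁ * (2 * M / (c * κ * N₂)) ≤ 2 / (c * κ) * M := by
    have : N₁ * (2 * M / (c * κ * N₂)) = (2 / (c * κ) * M) * (N₁ / N₂) := by
      field_simp
    rw [this]
    apply mul_le_of_le_one_right (by positivity)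
    rw [div_le_one hN20]; exact hN
  calc (#S : ℝ) ≤ _ := h1
    _ ≤ (1 + 2 * M / (c * κ * N₂)) * (N₁ * (1 + 1 / c)) := by
      gcongr
      exact h2.trans h3
    _ = (1 + 1 / c) * (N₁ + N₁ * (2 * M / (c * κ * N₂))) := by ring
    _ ≤ (1 + 1 / c) * (M + 2 / (c * κ) * M) := by gcongr
    _ = _ := by ring

lemma case2 {z : ℕ → ℝ} {c κ : ℝ} (H : Sep z c κ) {τ N₁ N₂ M : ℝ} (hN₁ : 1 ≤ N₁) (hN : N₁ ^ 2 ≤ N₂)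
    (hM1 : 1 ≤ M) (hM : M ≤ N₁) (S : Finset (ℕ × ℕ)) (hS : ∀ p ∈ S, Adm z τ N₁ N₂ M p) :
    (#S : ℝ) ≤ (1 + 2 / (c * κ)) * (1 + 10 / (c * κ)) * M := by
  have hc := H.c_pos
  have hk := H.k_pos
  have h1 := card_fibers S Prod.snd _ (fun b _ => fib_fst H hN₁ hM1 S hS b)
  have hN2 : 1 ≤ N₂ := by nlinarith
  have h2 : (#(S.image Prod.snd) : ℝ) ≤ 1 + 10 / (c * κ) := by
    have : (#(S.image Prod.snd) : ℝ) ≤ 1 + 2 * (5 * N₂) / (c * κ * N₂) := by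
      refine H.card_sq _ N₂ (-τ) (5 * N₂) hN2 (by linarith) fun n hn => ?_
      simp only [Finset.mem_image] at hn
      obtain ⟨p, hp, rfl⟩ := hn
      obtain ⟨h1, h2, h3, h4, h5, h6, h7⟩ := hS p hp
      refine ⟨h2, h6, ?_⟩
      have hp1 := H.pos _ h1
      have hz : z p.1 ^ 2 ≤ (2 * N₁) ^ 2 := by gcongr; linarith
      have h3 := abs_le.1 h3
      have hMN : M ≤ N₁ ^ 2 := by nlinarith
      rw [abs_le]
      constructor <;> nlinarith [sq_nonneg (z p.1)]
    refine this.trans (le_of_eq ?_)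
    field_simp
    ring
  have h3 : 1 + 2 * M / (c * κ * N₁) ≤ (1 + 2 / (c * κ)) * M := by
    have : 2 * M / (c * κ * N₁) ≤ 2 * M / (c * κ) := by
      apply div_le_div_of_nonneg_left (by linarith) (by positivity)
      exact le_mul_of_one_le_right (by positivity) hN₁
    calc _ ≤ M + 2 * M / (c * κ) := by linarith
      _ = _ := by ring
  calc (#S : ℝ) ≤ _ := h1
    _ ≤ ((1 + 2 / (c * κ)) * M) * (1 + 10 / (c * κ)) := by gcongr
    _ = _ := by ring

set_option maxHeartbeats 2000000 in
lemma case3 {z : ℕ → ℝ} {c κ : ℝ} (H : Sep z c κ) (C0 : ℝ) (hC0 : 0 < C0) (μ : ℕ → ℤ)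
    (hμ1 : ∀ n, 1 ≤ n → |z n - Real.pi / 4 * μ n| ≤ Real.pi / 2)
    (hμ2 : ∀ n, 1 ≤ n → |z n ^ 2 - Real.pi ^ 2 / 16 * (μ n : ℝ) ^ 2| ≤ C0) (ε : ℝ) (hε : 0 < ε) :
    ∃ C : ℝ, 0 < C ∧ ∀ τ N₁ N₂ M : ℝ, 1 ≤ N₁ → N₁ ≤ N₂ → N₂ ≤ N₁ ^ 2 → 1 ≤ M →
      ∀ S : Finset (ℕ × ℕ), (∀ p ∈ S, Adm z τ N₁ N₂ M p) → (#S : ℝ) ≤ C * N₁ ^ ε * M := by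
  obtain ⟨C1, hC1, hr⟩ := reps_bound (ε / 4) (by positivity)
  have hc := H.c_pos
  have hpi := Real.pi_gt_three
  set Q : ℝ := 16 + 4 * C0 with hQ
  set B : ℝ := 1 + Real.pi / c with hB
  set r0 : ℝ := ((reps 0).ncard : ℝ) with hr0
  have hr0' : 0 ≤ r0 := Nat.cast_nonneg _
  have hBp : 0 < B := by rw [hB]; positivity
  refine ⟨(B ^ 2 * ((C1 + r0) * Q ^ (ε / 4))) * (5 + 8 * C0), by positivity, ?_⟩
  intro τ N₁ N₂ M hN₁ hN hNN hM S hS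
  set f : ℕ × ℕ → ℕ := fun p => (μ p.1 ^ 2 + μ p.2 ^ 2).natAbs with hf
  have hfz : ∀ p, ((f p : ℕ) : ℤ) = μ p.1 ^ 2 + μ p.2 ^ 2 := fun p =>
    Int.natAbs_of_nonneg (by positivity)
  have hfr : ∀ p, ((f p : ℕ) : ℝ) = (μ p.1 : ℝ) ^ 2 + (μ p.2 : ℝ) ^ 2 := fun p => by
    have := hfz p
    have h2 : (((f p : ℕ) : ℤ) : ℝ) = ((μ p.1 ^ 2 + μ p.2 ^ 2 : ℤ) : ℝ) := by rw [this]
    push_cast at h2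
    exact h2
  have hpi2 : (1 / 2 : ℝ) ≤ Real.pi ^ 2 / 16 := by nlinarith
  have hfτ : ∀ p ∈ S, |Real.pi ^ 2 / 16 * (f p : ℝ) + τ| ≤ M + 2 * C0 := by
    intro p hp
    obtain ⟨h1, h2, h3, h4, h5, h6, h7⟩ := hS p hp
    have a1 := abs_le.1 (hμ2 _ h1)
    have a2 := abs_le.1 (hμ2 _ h2)
    have a3 := abs_le.1 h3
    rw [hfr, abs_le]
    constructor <;> linarith
  have himg : (#(S.image f) : ℝ) ≤ (5 + 8 * C0) * M := by
    have : (#(S.image f) : ℝ) ≤ 1 + 4 * (M + 2 * C0) := by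
      refine card_spacing _ _ (by positivity) ?_
      intro a ha b hb hab
      simp only [Finset.mem_image] at ha hb
      obtain ⟨p, hp, rfl⟩ := ha
      obtain ⟨q, hq, rfl⟩ := hb
      have a1 := abs_le.1 (hfτ p hp)
      have a2 := abs_le.1 (hfτ q hq)
      have h0 : (0 : ℝ) ≤ (f q : ℝ) - f p := by
        have : (f p : ℝ) ≤ f q := by exact_mod_cast hab
        linarith
      have h1 : (1 / 2 : ℝ) * ((f q : ℝ) - f p) ≤ Real.pi ^ 2 / 16 * ((f q : ℝ) - f p) := by gcongr
      linarith
    nlinarith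
  have hfib : ∀ a ∈ S.image f, (#{p ∈ S | f p = a} : ℝ) ≤
      B ^ 2 * ((C1 + r0) * (Q ^ (ε / 4) * N₁ ^ ε)) := by
    intro a ha
    have haQ : (a : ℝ) ≤ Q * N₁ ^ 4 := by
      simp only [Finset.mem_image] at ha
      obtain ⟨p, hp, rfl⟩ := ha
      obtain ⟨h1, h2, h3, h4, h5, h6, h7⟩ := hS p hp
      have a1 := abs_le.1 (hμ2 _ h1)
      have a2 := abs_le.1 (hμ2 _ h2)
      have p1 := H.pos _ h1
      have p2 := H.pos _ h2
      have b1 : z p.1 ^ 2 ≤ (2 * N₂) ^ 2 := by gcongr; linarith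
      have b2 : z p.2 ^ 2 ≤ (2 * N₂) ^ 2 := by gcongr; linarith
      have h8 : (1 / 2 : ℝ) * (f p : ℝ) ≤ Real.pi ^ 2 / 16 * (f p : ℝ) := by gcongr
      have h9 : N₂ ^ 2 ≤ N₁ ^ 4 := by
        calc N₂ ^ 2 ≤ (N₁ ^ 2) ^ 2 := pow_le_pow_left₀ (by linarith) hNN 2
          _ = _ := by ring
      have h10 : (1 : ℝ) ≤ N₁ ^ 4 := one_le_pow₀ hN₁
      have h11 : Real.pi ^ 2 / 16 * (f p : ℝ) ≤ 8 * N₂ ^ 2 + 2 * C0 := by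
        rw [hfr]; linarith
      rw [hQ]
      nlinarith
    have hreps : ((reps a).ncard : ℝ) ≤ (C1 + r0) * (Q ^ (ε / 4) * N₁ ^ ε) := by
      have hN4 : (Q * N₁ ^ 4) ^ (ε / 4) = Q ^ (ε / 4) * N₁ ^ ε := by
        rw [Real.mul_rpow (by positivity) (by positivity), ← Real.rpow_natCast N₁ 4,
          ← Real.rpow_mul (by positivity)]
        congr 2
        push_cast; ring
      rw [← hN4]
      have hge : 1 ≤ (Q * N₁ ^ 4) ^ (ε / 4) := by
        apply Real.one_le_rpow _ (by positivity)
        have h10 : (1 : ℝ) ≤ N₁ ^ 4 := one_le_pow₀ hN₁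
        rw [hQ]; nlinarith
      rcases Nat.eq_zero_or_pos a with rfl | hapos
      · calc ((reps 0).ncard : ℝ) = r0 * 1 := by rw [hr0]; ring
          _ ≤ (C1 + r0) * (Q * N₁ ^ 4) ^ (ε / 4) := by gcongr; linarith
      · calc ((reps a).ncard : ℝ) ≤ C1 * (a : ℝ) ^ (ε / 4) := hr a hapos
          _ ≤ (C1 + r0) * (Q * N₁ ^ 4) ^ (ε / 4) := by gcongr; linarith
    set T := ({p ∈ S | f p = a} : Finset (ℕ × ℕ)) with hT
    set g : ℕ × ℕ → GaussianInt := fun p => ⟨μ p.1, μ p.2⟩ with hg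
    have hgi : (#(T.image g) : ℝ) ≤ (reps a).ncard := by
      have hsub : ((T.image g : Finset GaussianInt) : Set GaussianInt) ⊆ reps a := by
        intro x hx
        simp only [Finset.coe_image, Set.mem_image, Finset.mem_coe, hT, Finset.mem_filter] at hx
        obtain ⟨p, ⟨hp, rfl⟩, rfl⟩ := hx
        show Zsqrtd.norm _ = _
        rw [gnorm, hfz]
      have := Set.ncard_le_ncard hsub (reps_finite a)
      rw [Set.ncard_coe_finset] at this
      exact_mod_cast this
    have hgf : ∀ b ∈ T.image g, (#{p ∈ T | g p = b} : ℝ) ≤ B ^ 2 := by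
      intro b _
      set U := ({p ∈ T | g p = b} : Finset (ℕ × ℕ)) with hU
      have hUS : ∀ p ∈ U, 1 ≤ p.1 ∧ 1 ≤ p.2 ∧ μ p.1 = b.re ∧ μ p.2 = b.im := by
        intro p hp
        simp only [hU, hT, Finset.mem_filter] at hp
        obtain ⟨⟨hpS, _⟩, rfl⟩ := hp
        obtain ⟨h1, h2, _⟩ := hS p hpS
        exact ⟨h1, h2, rfl, rfl⟩
      have u1 : (#(U.image Prod.fst) : ℝ) ≤ B := by
        refine H.card_interval _ (Real.pi / 4 * b.re - Real.pi / 2) Real.pi (by positivity)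
          fun n hn => ?_
        simp only [Finset.mem_image] at hn
        obtain ⟨p, hp, rfl⟩ := hn
        obtain ⟨h1, h2, h3, h4⟩ := hUS p hp
        have := abs_le.1 (hμ1 _ h1)
        rw [h3] at this
        exact ⟨h1, by linarith, by linarith⟩
      have u2 : (#(U.image Prod.snd) : ℝ) ≤ B := by
        refine H.card_interval _ (Real.pi / 4 * b.im - Real.pi / 2) Real.pi (by positivity)
          fun n hn => ?_
        simp only [Finset.mem_image] at hn
        obtain ⟨p, hp, rfl⟩ := hn
        obtain ⟨h1, h2, h3, h4⟩ := hUS p hp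
        have := abs_le.1 (hμ1 _ h2)
        rw [h4] at this
        exact ⟨h2, by linarith, by linarith⟩
      have u3 := Finset.card_le_card (Finset.subset_product (s := U))
      rw [Finset.card_product] at u3
      have u4 : (#U : ℝ) ≤ #(U.image Prod.fst) * #(U.image Prod.snd) := by exact_mod_cast u3
      calc (#U : ℝ) ≤ _ := u4
        _ ≤ B * B := by gcongr
        _ = B ^ 2 := by ring
    calc (#T : ℝ) ≤ B ^ 2 * #(T.image g) := card_fibers T g _ hgf
      _ ≤ _ := by gcongr; exact hgi.trans hreps
  calc (#S : ℝ) ≤ _ := card_fibers S f _ hfib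
    _ ≤ (B ^ 2 * ((C1 + r0) * (Q ^ (ε / 4) * N₁ ^ ε))) * ((5 + 8 * C0) * M) := by gcongr
    _ = _ := by ring

lemma count_bound {z : ℕ → ℝ} {c κ : ℝ} (H : Sep z c κ) (hz : ∀ n, 1 ≤ n → J0 (z n) = 0)
    (ε : ℝ) (hε : 0 < ε) :
    ∃ C : ℝ, 0 < C ∧ ∀ τ N₁ N₂ M : ℝ, 1 ≤ N₁ → 1 ≤ N₂ → 1 ≤ M →
      ∀ S : Finset (ℕ × ℕ), (∀ p ∈ S, Adm z τ N₁ N₂ M p) →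
        (#S : ℝ) ≤ C * (min N₁ N₂) ^ ε * M := by
  obtain ⟨C0, hC0, ha⟩ := zero_approx
  have : ∀ n, ∃ m : ℤ, 1 ≤ n → |z n - Real.pi / 4 * m| ≤ Real.pi / 2 ∧
      |z n ^ 2 - Real.pi ^ 2 / 16 * (m : ℝ) ^ 2| ≤ C0 := by
    intro n
    by_cases hn : 1 ≤ n
    · obtain ⟨m, hm⟩ := ha (z n) (H.pos n hn) (hz n hn)
      exact ⟨m, fun _ => hm⟩
    · exact ⟨0, fun h => absurd h hn⟩
  choose μ hμ using this
  obtain ⟨C3, hC3, h3⟩ := case3 H C0 hC0 μ (fun n hn => (hμ n hn).1) (fun n hn => (hμ n hn).2) ε hε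
  have hc := H.c_pos
  have hk := H.k_pos
  set A1 := (1 + 1 / c) * (1 + 2 / (c * κ)) with hA1
  set A2 := (1 + 2 / (c * κ)) * (1 + 10 / (c * κ)) with hA2
  have hA1p : 0 < A1 := by positivity
  have hA2p : 0 < A2 := by positivity
  have key : ∀ τ N₁ N₂ M : ℝ, 1 ≤ N₁ → N₁ ≤ N₂ → 1 ≤ M →
      ∀ S : Finset (ℕ × ℕ), (∀ p ∈ S, Adm z τ N₁ N₂ M p) →
        (#S : ℝ) ≤ (A1 + A2 + C3) * N₁ ^ ε * M := by
    intro τ N₁ N₂ M hN₁ hN hM S hS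
    have hge : 1 ≤ N₁ ^ ε := Real.one_le_rpow hN₁ hε.le
    rcases le_total N₂ (N₁ ^ 2) with h | h
    · refine (h3 τ N₁ N₂ M hN₁ hN h hM S hS).trans ?_
      gcongr
      linarith
    · rcases le_total N₁ M with h' | h'
      · refine (case1 H hN₁ hN h' S hS).trans ?_
        have h5 : A1 ≤ (A1 + A2 + C3) * N₁ ^ ε :=
          le_trans (by linarith) (le_mul_of_one_le_right (by positivity) hge)
        exact mul_le_mul_of_nonneg_right h5 (by linarith)
      · refine (case2 H hN₁ h hM h' S hS).trans ?_
        have h5 : A2 ≤ (A1 + A2 + C3) * N₁ ^ ε :=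
          le_trans (by linarith) (le_mul_of_one_le_right (by positivity) hge)
        exact mul_le_mul_of_nonneg_right h5 (by linarith)
  refine ⟨A1 + A2 + C3, by positivity, ?_⟩
  intro τ N₁ N₂ M hN₁ hN₂ hM S hS
  rcases le_total N₁ N₂ with h | h
  · rw [min_eq_left h]; exact key τ N₁ N₂ M hN₁ h hM S hS
  · rw [min_eq_right h, ← Finset.card_image_of_injective S Prod.swap_injective]
    refine key τ N₂ N₁ M hN₂ h hM _ fun p hp => ?_
    simp only [Finset.mem_image] at hp
    obtain ⟨q, hq, rfl⟩ := hp
    obtain ⟨h1, h2, h3, h4, h5, h6, h7⟩ := hS q hq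
    refine ⟨h2, h1, ?_, h6, h7, h4, h5⟩
    convert h3 using 2
    simp only [Prod.fst_swap, Prod.snd_swap]
    ring

lemma sep_of_zeros (z : ℕ → ℝ)
    (hzpos : ∀ n, 1 ≤ n → 0 < z n)
    (hzmono : ∀ m n, 1 ≤ m → m < n → z m < z n)
    (hzzero : ∀ n, 1 ≤ n → J0 (z n) = 0) : ∃ c κ : ℝ, Sep z c κ := by
  have h1 : 0 < z 1 := hzpos 1 le_rfl
  have hle : ∀ n, 1 ≤ n → z 1 ≤ z n := by
    intro n hn
    rcases hn.eq_or_lt with rfl | h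
    · exact le_rfl
    · exact (hzmono 1 n le_rfl h).le
  set c := min (1 / 2) (z 1 / 2) with hcdef
  have hc : 0 < c := by rw [hcdef]; positivity
  have hstep : ∀ n, 1 ≤ n → c ≤ z (n + 1) - z n := by
    intro n hn
    have hlt := hzmono n (n + 1) hn (Nat.lt_succ_self n)
    have hg := gap (hzpos n hn) hlt (hzzero n hn) (hzzero (n + 1) (by omega))
    by_contra hcon
    push Not at hcon
    have c1 : c ≤ 1 / 2 := min_le_left _ _
    have c2 : c ≤ z 1 / 2 := min_le_right _ _
    have := hle n hn
    set h := z (n + 1) - z n with hh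
    have hz' : z (n + 1) = z n + h := by rw [hh]; ring
    have hh0 : 0 < h := by rw [hh]; linarith
    rw [hz'] at hg
    nlinarith
  refine ⟨c, z 1 / (1 + z 1), hc, by positivity, hzpos, ?_, ?_⟩
  · intro m n hm hmn
    induction n, hmn using Nat.le_induction with
    | base => simp
    | succ k hk ih =>
      have := hstep k (hm.trans hk)
      push_cast
      linarith
  · intro n hn
    have := hle n hn
    rw [div_mul_eq_mul_div, div_le_iff₀ (by linarith)]
    nlinarith

end BesselAux


/-- Main combinatorial lemma: the measure (Lebesgue in `τ₁`, counting in `(n₁, n₂)`)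
of the set `Λ(τ, L₁, L₂, N₁, N₂)` is at most `C_ε (min(N₁,N₂))^ε L₁ L₂`. -/
theorem combinatorial_measure_bound
    (z : ℕ → ℝ)
    (hzpos : ∀ n, 1 ≤ n → 0 < z n)
    (hzmono : ∀ m n, 1 ≤ m → m < n → z m < z n)
    (hzzero : ∀ n, 1 ≤ n → J0 (z n) = 0)
    (hzall : ∀ x : ℝ, 0 < x → J0 x = 0 → ∃ n, 1 ≤ n ∧ z n = x) :
    ∀ ε : ℝ, 0 < ε → ∃ C : ℝ, 0 < C ∧
      ∀ τ N₁ N₂ L₁ L₂ : ℝ, 1 ≤ N₁ → 1 ≤ N₂ → 1 ≤ L₁ → 1 ≤ L₂ →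
        (volume.prod (Measure.count.prod Measure.count))
          {p : ℝ × ℕ × ℕ | 1 ≤ p.2.1 ∧ 1 ≤ p.2.2 ∧
            L₁ ≤ 1 + |p.1 + (z p.2.1) ^ 2| ∧ 1 + |p.1 + (z p.2.1) ^ 2| ≤ 2 * L₁ ∧
            L₂ ≤ 1 + |τ - p.1 + (z p.2.2) ^ 2| ∧ 1 + |τ - p.1 + (z p.2.2) ^ 2| ≤ 2 * L₂ ∧
            N₁ ≤ 1 + z p.2.1 ∧ 1 + z p.2.1 ≤ 2 * N₁ ∧
            N₂ ≤ 1 + z p.2.2 ∧ 1 + z p.2.2 ≤ 2 * N₂} ≤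
          ENNReal.ofReal (C * (min N₁ N₂) ^ ε * (L₁ * L₂)) := by
  intro ε hε
  obtain ⟨c, κ, H⟩ := BesselAux.sep_of_zeros z hzpos hzmono hzzero
  obtain ⟨C, hC, hcount⟩ := BesselAux.count_bound H hzzero ε hε
  refine ⟨16 * C, by positivity, ?_⟩
  intro τ N₁ N₂ L₁ L₂ hN₁ hN₂ hL₁ hL₂
  classical
  have hc := H.c_pos
  set M : ℝ := 4 * max L₁ L₂ with hM
  have hmax1 : L₁ ≤ max L₁ L₂ := le_max_left _ _
  have hmax2 : L₂ ≤ max L₁ L₂ := le_max_right _ _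
  have hM1 : 1 ≤ M := by rw [hM]; linarith
  obtain ⟨B, hB⟩ := exists_nat_gt (1 + (2 * N₁ + 2 * N₂) / c)
  set S : Finset (ℕ × ℕ) := ((Finset.range B) ×ˢ (Finset.range B)).filter
    (BesselAux.Adm z τ N₁ N₂ M) with hS
  have hbd : ∀ n, 1 ≤ n → z n ≤ 2 * N₁ + 2 * N₂ → n < B := by
    intro n hn hz
    have h1 := H.gap 1 n le_rfl hn
    have h2 := H.pos 1 le_rfl
    have h3 : (n : ℝ) - 1 ≤ (2 * N₁ + 2 * N₂) / c := by
      rw [le_div_iff₀ hc]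
      push_cast at h1
      linarith
    have h4 : (n : ℝ) < B := by linarith
    exact_mod_cast h4
  have hcard := hcount τ N₁ N₂ M hN₁ hN₂ hM1 S (fun p hp => (Finset.mem_filter.1 hp).2)
  set I : ℕ × ℕ → Set ℝ := fun p =>
    if L₁ ≤ L₂ then Set.Icc (-(z p.1 ^ 2) - 2 * L₁) (-(z p.1 ^ 2) + 2 * L₁)
    else Set.Icc (τ + z p.2 ^ 2 - 2 * L₂) (τ + z p.2 ^ 2 + 2 * L₂) with hI
  have hIv : ∀ p, volume (I p) = ENNReal.ofReal (4 * min L₁ L₂) := by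
    intro p
    simp only [hI]
    split_ifs with h
    · rw [Real.volume_Icc, min_eq_left h]; congr 1; ring
    · rw [Real.volume_Icc, min_eq_right (not_le.1 h).le]; congr 1; ring
  calc _ ≤ (volume.prod (Measure.count.prod Measure.count)) (⋃ p ∈ S, I p ×ˢ ({p} : Set (ℕ × ℕ))) := by
        apply measure_mono
        rintro ⟨t, n₁, n₂⟩ ⟨h1, h2, h3, h4, h5, h6, h7, h8, h9, h10⟩
        simp only at h1 h2 h3 h4 h5 h6 h7 h8 h9 h10
        have a4 := abs_le.1 (show |t + z n₁ ^ 2| ≤ 2 * L₁ - 1 by linarith)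
        have a6 := abs_le.1 (show |τ - t + z n₂ ^ 2| ≤ 2 * L₂ - 1 by linarith)
        simp only [Set.mem_iUnion]
        refine ⟨(n₁, n₂), ?_, ?_, rfl⟩
        · rw [hS, Finset.mem_filter, Finset.mem_product, Finset.mem_range, Finset.mem_range]
          refine ⟨⟨hbd _ h1 (by linarith), hbd _ h2 (by linarith)⟩, h1, h2, ?_, h7, h8, h9, h10⟩
          rw [abs_le, hM]
          constructor <;> simp only <;> linarith
        · simp only [hI]
          split_ifs with h
          · exact ⟨by linarith, by linarith⟩
          · exact ⟨by linarith, by linarith⟩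
    _ ≤ ∑ p ∈ S, (volume.prod (Measure.count.prod Measure.count)) (I p ×ˢ ({p} : Set (ℕ × ℕ))) :=
        measure_biUnion_finset_le _ _
    _ = ∑ p ∈ S, ENNReal.ofReal (4 * min L₁ L₂) := by
        refine Finset.sum_congr rfl fun p _ => ?_
        rw [Measure.prod_prod, hIv, show ({p} : Set (ℕ × ℕ)) = {p.1} ×ˢ {p.2} by simp,
          Measure.prod_prod, Measure.count_singleton, Measure.count_singleton, one_mul, mul_one]
    _ = ENNReal.ofReal ((S.card : ℝ) * (4 * min L₁ L₂)) := by
        rw [Finset.sum_const, nsmul_eq_mul, ENNReal.ofReal_mul (Nat.cast_nonneg _),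
          ENNReal.ofReal_natCast]
    _ ≤ _ := by
        apply ENNReal.ofReal_le_ofReal
        have hmin : 0 ≤ min L₁ L₂ := le_min (by linarith) (by linarith)
        calc (S.card : ℝ) * (4 * min L₁ L₂) ≤ (C * (min N₁ N₂) ^ ε * M) * (4 * min L₁ L₂) := by
              gcongr
          _ = 16 * C * (min N₁ N₂) ^ ε * (max L₁ L₂ * min L₁ L₂) := by rw [hM]; ring
          _ = _ := by rw [max_mul_min]
end
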